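/- arXiv:2006.09969 — 9 statements merged into one kernel-verified Lean document; each statement's English description precedes it below -/
import Mathlib

section
/- There is a universal constant K > 0 such that for all α ∈ (0,1), all δ with 0 < δ < α and α + δ < 1, and all ε ∈ (0,1), there exists a real univariate polynomial p of degree at most K·(1/δ)·(1 + log(1/ε))² satisfying: (1) |p(x) − s_α(x)| ≤ ε for all x ∈ [0, α−δ] ∪ [α+δ, 1]; (2) 0 ≤ p(x) ≤ 1 for all x ∈ [0,1]; (3) p is monotonically increasing on the interval (α−δ, α+δ). -/
open Polynomial in
lemma exists_prim (Q : ℝ[X]) : ∃ P : ℝ[X], derivative P = Q ∧ P.natDegree ≤ Q.natDegree + 1 := by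
  refine ⟨∑ i ∈ Finset.range (Q.natDegree + 1), monomial (i+1) (Q.coeff i / (i+1)), ?_, ?_⟩
  · conv_rhs => rw [Q.as_sum_range]
    rw [derivative_sum]
    refine Finset.sum_congr rfl fun i _ => ?_
    rw [derivative_monomial]
    have : (i:ℝ) + 1 ≠ 0 := by positivity
    push_cast
    rw [div_mul_cancel₀ _ this]
  · apply natDegree_sum_le_of_forall_le
    intro i hi
    have := Finset.mem_range.1 hi
    exact (natDegree_monomial_le _).trans (by omega)

lemma cheb_sin (j : ℕ) (φ : ℝ) :
    (Polynomial.Chebyshev.T ℝ (4 * j + 1 : ℤ)).eval (Real.sin φ) = Real.sin ((4 * j + 1) * φ) := by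
  rw [← Real.cos_pi_div_two_sub, Polynomial.Chebyshev.T_real_cos, ← Real.cos_pi_div_two_sub]
  push_cast
  rw [← Real.cos_add_nat_mul_two_pi (Real.pi / 2 - _) j]
  congr 1
  ring

open Polynomial in
lemma exists_R (j : ℕ) : ∃ R : ℝ[X], R.natDegree ≤ 4 * j ∧
    (∀ y : ℝ, |y| ≤ 1 → R.eval y ^ 2 * ((4 * j + 1) * y) ^ 2 ≤ 1) ∧
    (∀ y : ℝ, |y| * (4 * j + 1) ≤ 1 → y ≠ 0 → 1 / 4 ≤ R.eval y ^ 2) := by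
  have h0 : (Chebyshev.T ℝ (4 * j + 1 : ℤ)).eval 0 = 0 := by
    simpa using cheb_sin j 0
  obtain ⟨S, hS⟩ : X ∣ Chebyshev.T ℝ (4 * j + 1 : ℤ) := by
    rw [X_dvd_iff, coeff_zero_eq_eval_zero, h0]
  have hn : (0:ℝ) < 4 * j + 1 := by positivity
  have key : ∀ y : ℝ, |y| ≤ 1 → (C (1 / (4 * j + 1 : ℝ)) * S).eval y * ((4 * j + 1) * y)
      = Real.sin ((4 * j + 1) * Real.arcsin y) := by
    intro y hy
    have hy' := abs_le.1 hy
    rw [← cheb_sin, Real.sin_arcsin hy'.1 hy'.2, hS]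
    simp only [eval_mul, eval_C, eval_X]
    field_simp
  refine ⟨C (1 / (4 * j + 1 : ℝ)) * S, ?_, ?_, ?_⟩
  · refine (natDegree_C_mul_le _ _).trans ?_
    by_cases hS0 : S = 0
    · simp [hS0]
    have := congrArg natDegree hS
    rw [natDegree_X_mul hS0, Chebyshev.natDegree_T] at this
    omega
  · intro y hy
    rw [← mul_pow, key y hy]
    exact Real.sin_sq_le_one _
  · intro y hy hy0
    have hpos : 0 < |y| := abs_pos.2 hy0
    have hy1 : |y| ≤ 1 := by
      have : (0:ℝ) ≤ 4 * j := by positivity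
      nlinarith
    have hk := key y hy1
    have hy' := abs_le.1 hy1
    set φ := Real.arcsin y with hφ
    have hs : Real.sin φ = y := Real.sin_arcsin hy'.1 hy'.2
    have hφ2 : |φ| ≤ Real.pi / 2 := abs_le.2 ⟨Real.neg_pi_div_two_le_arcsin y, Real.arcsin_le_pi_div_two y⟩
    have h1 : 2 / Real.pi * |φ| ≤ |y| := by
      have := Real.mul_abs_le_abs_sin hφ2
      rwa [hs] at this
    have hyφ : |y| ≤ |φ| := by rw [← hs]; exact Real.abs_sin_le_abs
    have hpi := Real.pi_pos
    have h2 : |(4 * j + 1) * φ| ≤ Real.pi / 2 := by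
      rw [abs_mul, abs_of_pos hn]
      have h3 : |φ| ≤ Real.pi / 2 * |y| := by
        rw [div_mul_eq_mul_div, div_le_iff₀ hpi] at h1
        linarith
      nlinarith
    have h4 := Real.mul_abs_le_abs_sin h2
    rw [← hk, abs_mul, abs_mul, abs_mul, abs_of_pos hn] at h4
    have h5 : (1:ℝ)/2 ≤ 2 / Real.pi := by
      rw [div_le_div_iff₀ (by norm_num) hpi]; linarith [Real.pi_le_four]
    have h6 : 1 / 2 ≤ |(C (1 / (4 * j + 1 : ℝ)) * S).eval y| := by
      have : 1/2 * ((4 * j + 1) * |y|) ≤ |(C (1 / (4 * j + 1 : ℝ)) * S).eval y| * ((4 * j + 1) * |y|) := by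
        refine le_trans ?_ h4
        gcongr
      exact le_of_mul_le_mul_right this (by positivity)
    rw [← sq_abs]
    nlinarith

open Polynomial in
lemma exists_P (j m : ℕ) (hm : 1 ≤ m) (δ : ℝ) (hδ : 0 < δ) (hδ1 : δ < 1) (hj : 4 ≤ (4 * j + 1) * δ) :
    ∃ P : ℝ[X], P.natDegree ≤ 4 * j * (2 * m) + 1 ∧ Monotone (fun x => P.eval x) ∧
      0 < P.eval δ - P.eval (-δ) ∧
      P.eval 1 - P.eval δ ≤ 2 * (1/4)^m * (P.eval δ - P.eval (-δ)) ∧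
      P.eval (-δ) - P.eval (-1) ≤ 2 * (1/4)^m * (P.eval δ - P.eval (-δ)) := by
  obtain ⟨R, hRd, hR1, hR2⟩ := exists_R j
  obtain ⟨P, hP, hPd⟩ := exists_prim (R ^ (2 * m))
  set n : ℝ := 4 * j + 1 with hn
  have hnpos : 0 < n := by positivity
  have hder : ∀ x, HasDerivAt (fun x => P.eval x) ((R.eval x ^ 2) ^ m) x := by
    intro x
    have := P.hasDerivAt x
    rwa [hP, eval_pow, pow_mul] at this
  have hdiff : Differentiable ℝ (fun x => P.eval x) := fun x => (hder x).differentiableAt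
  have hmono : Monotone (fun x => P.eval x) := by
    apply monotone_of_deriv_nonneg hdiff
    intro x
    rw [(hder x).deriv]; positivity
  have hR2' : ∀ y : ℝ, |y| * n ≤ 1 → 1 / 4 ≤ R.eval y ^ 2 := by
    intro y hy
    by_cases h0 : y = 0
    · subst h0
      have hlim : Filter.Tendsto (fun y => R.eval y ^ 2) (nhdsWithin 0 {0}ᶜ) (nhds (R.eval 0 ^ 2)) :=
        ((R.continuous.pow 2).tendsto 0).mono_left nhdsWithin_le_nhds
      refine ge_of_tendsto hlim ?_
      have : ∀ᶠ y : ℝ in nhds 0, |y| * n < 1 := by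
        have hc : Continuous fun y : ℝ => |y| * n := by fun_prop
        exact hc.continuousAt.eventually_lt continuousAt_const (by simp)
      filter_upwards [nhdsWithin_le_nhds this, self_mem_nhdsWithin] with y h1 h2
      exact hR2 y h1.le h2
    · exact hR2 y hy h0
  have hinv : n⁻¹ ≤ δ := by
    rw [inv_le_iff_one_le_mul₀ hnpos]; linarith
  -- main mass
  have hmass : 2 * n⁻¹ * (1/4)^m ≤ P.eval δ - P.eval (-δ) := by
    have h1 := hmono hinv
    have h2 := hmono (neg_le_neg hinv)
    have h3 : (1/4:ℝ)^m * (n⁻¹ - (-n⁻¹)) ≤ P.eval n⁻¹ - P.eval (-n⁻¹) := by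
      refine Convex.mul_sub_le_image_sub_of_le_deriv (convex_Icc (-n⁻¹) n⁻¹) (f := fun x => P.eval x) hdiff.continuous.continuousOn
        hdiff.differentiableOn ?_ (-n⁻¹) ?_ n⁻¹ ?_ ?_
      · intro x hx
        rw [interior_Icc] at hx
        rw [(hder x).deriv]
        refine pow_le_pow_left₀ (by norm_num) (hR2' x ?_) m
        have : |x| ≤ n⁻¹ := abs_le.2 ⟨hx.1.le, hx.2.le⟩
        calc |x| * n ≤ n⁻¹ * n := by gcongr
          _ = 1 := inv_mul_cancel₀ hnpos.ne'
      · have := inv_pos.2 hnpos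
        constructor <;> linarith
      · have := inv_pos.2 hnpos
        constructor <;> linarith
      · have := inv_pos.2 hnpos
        linarith
    simp only at h1 h2
    linarith
  -- tails
  have hQ : ∀ y : ℝ, |y| ≤ 1 → δ ≤ |y| → (R.eval y ^ 2) ^ m ≤ (1/16)^(m-1) * (n^2)⁻¹ * (y^2)⁻¹ := by
    intro y hy1 hyδ
    have hy2 : δ ^ 2 ≤ y ^ 2 := by rw [← sq_abs y]; gcongr
    have hypos : 0 < y ^ 2 := lt_of_lt_of_le (by positivity) hy2
    have h1 : R.eval y ^ 2 ≤ (n^2)⁻¹ * (y^2)⁻¹ := by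
      rw [← mul_inv, ← mul_pow, ← one_div, le_div_iff₀ (by rw [mul_pow]; positivity)]
      exact hR1 y hy1
    have h2 : (n^2)⁻¹ * (y^2)⁻¹ ≤ 1/16 := by
      rw [← mul_inv, ← one_div]
      apply one_div_le_one_div_of_le (by norm_num)
      have : n^2 * δ^2 ≤ n^2 * y^2 := by gcongr
      nlinarith
    obtain ⟨k, rfl⟩ : ∃ k, m = k + 1 := ⟨m - 1, by omega⟩
    rw [pow_succ, Nat.add_sub_cancel, mul_assoc]
    gcongr
    exact h1.trans h2
  set A : ℝ := (1/16)^(m-1) * (n^2)⁻¹ with hA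
  have hApos : 0 < A := by positivity
  have hAδ : A * δ⁻¹ ≤ 2 * (1/4)^m * (2 * n⁻¹ * (1/4)^m) := by
    obtain ⟨k, rfl⟩ : ∃ k, m = k + 1 := ⟨m - 1, by omega⟩
    have h1 : (n * δ)⁻¹ ≤ 1/4 := by
      rw [← one_div]; exact one_div_le_one_div_of_le (by norm_num) hj
    have h2 : A * δ⁻¹ = (1/16)^k * n⁻¹ * (n * δ)⁻¹ := by
      rw [hA, Nat.add_sub_cancel]; field_simp
    have h3 : 2 * (1/4:ℝ)^(k+1) * (2 * n⁻¹ * (1/4)^(k+1)) = (1/16)^k * n⁻¹ * (1/4) := by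
      have : (1/16:ℝ)^k = (1/4)^k * (1/4)^k := by rw [← mul_pow]; norm_num
      rw [this, pow_succ]; ring
    rw [h2, h3]
    gcongr
  have hderG : ∀ x : ℝ, x ≠ 0 → HasDerivAt (fun x => P.eval x + A * x⁻¹)
      ((R.eval x ^ 2) ^ m + A * (-(x^2)⁻¹)) x := fun x hx =>
    (hder x).add ((hasDerivAt_inv hx).const_mul A)
  have htail : ∀ a b : ℝ, a ≤ b → (∀ y ∈ Set.Icc a b, |y| ≤ 1 ∧ δ ≤ |y|) →
      P.eval b + A * b⁻¹ ≤ P.eval a + A * a⁻¹ := by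
    intro a b hab hy
    have hne : ∀ y ∈ Set.Icc a b, y ≠ 0 := fun y h h0 => by
      have := (hy y h).2
      rw [h0, abs_zero] at this; linarith
    have hanti : AntitoneOn (fun x => P.eval x + A * x⁻¹) (Set.Icc a b) := by
      apply antitoneOn_of_deriv_nonpos (convex_Icc a b)
      · exact fun x hx => (hderG x (hne x hx)).continuousAt.continuousWithinAt
      · exact fun x hx => (hderG x (hne x (interior_subset hx))).differentiableAt.differentiableWithinAt
      · intro x hx
        have hx' := interior_subset hx
        rw [(hderG x (hne x hx')).deriv]
        have := hQ x (hy x hx').1 (hy x hx').2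
        linarith
    exact hanti ⟨le_rfl, hab⟩ ⟨hab, le_rfl⟩ hab
  have hfin : A * δ⁻¹ ≤ 2 * (1/4)^m * (P.eval δ - P.eval (-δ)) :=
    hAδ.trans (by gcongr)
  refine ⟨P, ?_, hmono, ?_, ?_, ?_⟩
  · refine hPd.trans ?_
    have : (R ^ (2*m)).natDegree ≤ 2 * m * R.natDegree := natDegree_pow_le
    nlinarith
  · exact lt_of_lt_of_le (by positivity) hmass
  · have := htail δ 1 hδ1.le (fun y hy => by
      have h0 : 0 ≤ y := hδ.le.trans hy.1
      rw [abs_of_nonneg h0]; exact ⟨hy.2, hy.1⟩)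
    rw [inv_one] at this
    linarith
  · have := htail (-1) (-δ) (by linarith) (fun y hy => by
      have h0 : y ≤ 0 := by linarith [hy.2]
      rw [abs_of_nonpos h0]; constructor <;> linarith [hy.1, hy.2])
    rw [inv_neg, inv_neg, inv_one] at this
    linarith

/-- low-degree SoS-friendly polynomial approximation of the step function s_α
(Diakonikolas et al.): degree O((1/δ)·log²(1/ε)), ε-close to the step outside (α−δ, α+δ),
bounded in [0,1] on [0,1], and monotone on (α−δ, α+δ). -/
theorem stmt3 :
    ∃ K : ℝ, 0 < K ∧
      ∀ α δ ε : ℝ, 0 < α → α < 1 → 0 < δ → δ < α → α + δ < 1 → 0 < ε → ε < 1 →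
        ∃ p : Polynomial ℝ,
          (p.natDegree : ℝ) ≤ K * (1 / δ) * (1 + Real.log (1 / ε)) ^ 2 ∧
          (∀ x : ℝ, x ∈ Set.Icc (0 : ℝ) (α - δ) ∪ Set.Icc (α + δ) 1 →
            |p.eval x - (if x < α then (0 : ℝ) else 1)| ≤ ε) ∧
          (∀ x : ℝ, 0 ≤ x → x ≤ 1 → 0 ≤ p.eval x ∧ p.eval x ≤ 1) ∧
          MonotoneOn (fun x => p.eval x) (Set.Ioo (α - δ) (α + δ)) := by
  refine ⟨36, by norm_num, ?_⟩
  intro α δ ε hα hα1 hδ hδα hαδ hε hε1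
  have hδ1 : δ < 1 := by linarith
  set L := Real.log (1 / ε) with hL
  have hLpos : 0 < L := Real.log_pos (by rw [lt_div_iff₀ hε]; linarith)
  set j := ⌈1 / δ⌉₊ with hjdef
  set m := ⌈L⌉₊ + 1 with hmdef
  have hj1 : 1 / δ ≤ j := Nat.le_ceil _
  have hj2 : (j:ℝ) < 1 / δ + 1 := Nat.ceil_lt_add_one (by positivity)
  have hm1 : L ≤ (⌈L⌉₊ : ℝ) := Nat.le_ceil _
  have hm2 : (⌈L⌉₊ : ℝ) < L + 1 := Nat.ceil_lt_add_one hLpos.le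
  have hj : 4 ≤ (4 * j + 1) * δ := by
    rw [div_le_iff₀ hδ] at hj1
    linarith
  obtain ⟨P, hPd, hmono, hD, hT1, hT2⟩ := exists_P j m (by omega) δ hδ hδ1 hj
  have hεm : 2 * (1/4:ℝ)^m ≤ ε := by
    have h1 : 1 / ε ≤ 4 ^ ⌈L⌉₊ := by
      calc 1 / ε = Real.exp L := by rw [hL, Real.exp_log (by positivity)]
        _ ≤ Real.exp (⌈L⌉₊ : ℝ) := Real.exp_le_exp.2 hm1
        _ = Real.exp 1 ^ ⌈L⌉₊ := by rw [← Real.exp_nat_mul, mul_one]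
        _ ≤ 4 ^ ⌈L⌉₊ := by
          gcongr
          linarith [Real.exp_one_lt_d9]
    have h2 : (1/4:ℝ)^⌈L⌉₊ ≤ ε := by
      rw [div_pow, one_pow]
      exact (one_div_le hε (by positivity)).1 h1
    rw [hmdef, pow_succ]
    linarith
  set D := P.eval (1 - α) - P.eval (-α) with hDdef
  have m1 : P.eval δ ≤ P.eval (1 - α) := hmono (by linarith)
  have m2 : P.eval (-α) ≤ P.eval (-δ) := hmono (by linarith)
  have m3 : P.eval (1 - α) ≤ P.eval 1 := hmono (by linarith)
  have m4 : P.eval (-1) ≤ P.eval (-α) := hmono (by linarith)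
  have hDD : P.eval δ - P.eval (-δ) ≤ D := by linarith
  have hDpos : 0 < D := by linarith
  have hεD : 2 * (1/4:ℝ)^m * (P.eval δ - P.eval (-δ)) ≤ ε * D := by
    gcongr
  have hev : ∀ x : ℝ, (Polynomial.C D⁻¹ * (P.comp (Polynomial.X - Polynomial.C α) -
      Polynomial.C (P.eval (-α)))).eval x = (P.eval (x - α) - P.eval (-α)) / D := by
    intro x
    simp [Polynomial.eval_comp, div_eq_inv_mul]
  refine ⟨Polynomial.C D⁻¹ * (P.comp (Polynomial.X - Polynomial.C α) -
      Polynomial.C (P.eval (-α))), ?_, ?_, ?_, ?_⟩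
  · have hd : (Polynomial.C D⁻¹ * (P.comp (Polynomial.X - Polynomial.C α) -
      Polynomial.C (P.eval (-α)))).natDegree ≤ 4 * j * (2 * m) + 1 := by
      refine (Polynomial.natDegree_C_mul_le _ _).trans ?_
      rw [Polynomial.natDegree_sub_C, Polynomial.natDegree_comp, Polynomial.natDegree_X_sub_C, mul_one]
      exact hPd
    have hd' : ((Polynomial.C D⁻¹ * (P.comp (Polynomial.X - Polynomial.C α) -
      Polynomial.C (P.eval (-α)))).natDegree : ℝ) ≤ 4 * j * (2 * m) + 1 := by
      exact_mod_cast hd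
    have hmR : (m:ℝ) ≤ 2 * (1 + L) := by rw [hmdef]; push_cast; linarith
    have hm1R : (1:ℝ) ≤ m := by rw [hmdef]; push_cast; linarith
    have hδi : 1 ≤ 1 / δ := by rw [le_div_iff₀ hδ]; linarith
    have h9 : (4 * j + 1 : ℝ) ≤ 9 * (1 / δ) := by linarith
    calc _ ≤ (4 * j * (2 * m) + 1 : ℝ) := hd'
      _ ≤ (4 * j + 1) * (2 * m) := by linarith
      _ ≤ (9 * (1 / δ)) * (2 * (2 * (1 + L))) := by gcongr
      _ = 36 * (1 / δ) * (1 + L) := by ring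
      _ ≤ 36 * (1 / δ) * (1 + L) ^ 2 := by
        gcongr
        nlinarith
  · intro x hx
    rw [hev]
    rcases hx with hx | hx
    · have h1 : P.eval (-α) ≤ P.eval (x - α) := hmono (by linarith [hx.1])
      have h2 : P.eval (x - α) ≤ P.eval (-δ) := hmono (by linarith [hx.2])
      rw [if_pos (by linarith [hx.2]), sub_zero, abs_of_nonneg (div_nonneg (by linarith) hDpos.le),
        div_le_iff₀ hDpos]
      linarith
    · have h1 : P.eval (x - α) ≤ P.eval (1 - α) := hmono (by linarith [hx.2])
      have h2 : P.eval δ ≤ P.eval (x - α) := hmono (by linarith [hx.1])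
      rw [if_neg (by linarith [hx.1]), abs_sub_comm, one_sub_div hDpos.ne',
        abs_of_nonneg (div_nonneg (by linarith) hDpos.le), div_le_iff₀ hDpos]
      linarith
  · intro x h0 h1
    rw [hev]
    have h1 : P.eval (x - α) ≤ P.eval (1 - α) := hmono (by linarith)
    have h2 : P.eval (-α) ≤ P.eval (x - α) := hmono (by linarith)
    refine ⟨div_nonneg (by linarith) hDpos.le, ?_⟩
    rw [div_le_one hDpos]
    linarith
  · intro x _ y _ hxy
    simp only [hev]
    have : P.eval (x - α) ≤ P.eval (y - α) := hmono (by linarith)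
    gcongr
end

section
/- Let q be a real univariate polynomial of degree d that is nonnegative on the interval [a,b], where a < b are real numbers. Then there exist real polynomials s and t, each of degree at most d, such that: if d is even, q(x) = s(x)² + (x−a)(b−x)·t(x)², and if d is odd, q(x) = (x−a)·s(x)² + (b−x)·t(x)², as an identity of polynomials. -/
open Polynomial

/-- Degree bound with integer bound, the zero polynomial satisfying every bound. -/
def LukB (p : ℝ[X]) (k : ℤ) : Prop := p = 0 ∨ (p.natDegree : ℤ) ≤ k

theorem LukB.mul {p q : ℝ[X]} {k l n : ℤ} (hp : LukB p k) (hq : LukB q l) (h : k + l = n) :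
    LukB (p * q) n := by
  rcases hp with rfl | hp
  · left; simp
  rcases hq with rfl | hq
  · left; simp
  right
  have := natDegree_mul_le (p := p) (q := q)
  omega

theorem LukB.add {p q : ℝ[X]} {k : ℤ} (hp : LukB p k) (hq : LukB q k) : LukB (p + q) k := by
  rcases hp with rfl | hp
  · simpa using hq
  rcases hq with rfl | hq
  · right; simpa using hp
  right
  have := natDegree_add_le p q
  omega

theorem LukB.sub {p q : ℝ[X]} {k : ℤ} (hp : LukB p k) (hq : LukB q k) : LukB (p - q) k := by
  rw [sub_eq_add_neg]
  refine hp.add ?_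
  rcases hq with rfl | hq
  · left; simp
  · right; simpa using hq

theorem LukB.zero (k : ℤ) : LukB 0 k := Or.inl rfl

theorem LukB.const (c : ℝ) : LukB (C c) 0 := by right; simp

theorem LukB.lin (c : ℝ) : LukB (X - C c) 1 := by right; simp

theorem LukB.lin2 (c : ℝ) : LukB (C c - X) 1 := by
  right
  have : C c - X = -(X - C c : ℝ[X]) := by ring
  rw [this, natDegree_neg]; simp

/-- The strengthened representation property. -/
def LukP (a b : ℝ) (d : ℕ) (q : ℝ[X]) : Prop :=
  (∃ m : ℕ, d = 2 * m ∧ ∃ s t : ℝ[X], LukB s m ∧ LukB t (m - 1) ∧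
    q = s ^ 2 + (X - C a) * (C b - X) * t ^ 2) ∨
  (∃ m : ℕ, d = 2 * m + 1 ∧ ∃ s t : ℝ[X], LukB s m ∧ LukB t m ∧
    q = (X - C a) * s ^ 2 + (C b - X) * t ^ 2)

theorem LukP.mul_eo {a b : ℝ} {m n : ℕ} {u v s t : ℝ[X]}
    (hu : LukB u m) (hv : LukB v (m - 1)) (hs : LukB s n) (ht : LukB t n) :
    LukP a b (2 * m + (2 * n + 1)) ((u ^ 2 + (X - C a) * (C b - X) * v ^ 2) *
      ((X - C a) * s ^ 2 + (C b - X) * t ^ 2)) := by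
  right
  refine ⟨m + n, by ring, u * s - (C b - X) * (v * t), u * t + (X - C a) * (v * s), ?_, ?_, by ring⟩
  · exact (hu.mul hs (by push_cast; ring)).sub
      ((LukB.lin2 b).mul (hv.mul ht rfl) (by push_cast; ring))
  · exact (hu.mul ht (by push_cast; ring)).add
      ((LukB.lin a).mul (hv.mul hs rfl) (by push_cast; ring))

theorem LukP.mul {a b : ℝ} {d e : ℕ} {p q : ℝ[X]} (hp : LukP a b d p) (hq : LukP a b e q) :
    LukP a b (d + e) (p * q) := by
  rcases hp with ⟨m, rfl, u, v, hu, hv, rfl⟩ | ⟨m, rfl, u, v, hu, hv, rfl⟩ <;>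
  rcases hq with ⟨n, rfl, s, t, hs, ht, rfl⟩ | ⟨n, rfl, s, t, hs, ht, rfl⟩
  · left
    refine ⟨m + n, by ring, u * s - (X - C a) * (C b - X) * (v * t), u * t + v * s, ?_, ?_, by ring⟩
    · exact (hu.mul hs (by push_cast; ring)).sub
        (((LukB.lin a).mul (LukB.lin2 b) rfl).mul (hv.mul ht rfl) (by push_cast; ring))
    · exact (hu.mul ht (by push_cast; ring)).add (hv.mul hs (by push_cast; ring))
  · exact LukP.mul_eo hu hv hs ht
  · rw [add_comm (2 * m + 1), mul_comm (_ + _)]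
    exact LukP.mul_eo hs ht hu hv
  · left
    refine ⟨m + n + 1, by ring, (X - C a) * (u * s) - (C b - X) * (v * t), u * t + v * s,
      ?_, ?_, by ring⟩
    · exact ((LukB.lin a).mul (hu.mul hs rfl) (by push_cast; ring)).sub
        ((LukB.lin2 b).mul (hv.mul ht rfl) (by push_cast; ring))
    · exact (hu.mul ht (by push_cast; ring)).add (hv.mul hs (by push_cast; ring))

theorem LukP.const {a b c : ℝ} (hc : 0 ≤ c) : LukP a b 0 (C c) := by
  left
  refine ⟨0, rfl, C (√c), 0, by simpa using LukB.const _, LukB.zero _, ?_⟩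
  rw [← C_pow, Real.sq_sqrt hc]; simp

/-- A linear polynomial nonnegative at both ends. -/
theorem LukP.linear {a b k l : ℝ} (hab : a < b) (ha : 0 ≤ k * a + l) (hb : 0 ≤ k * b + l) :
    LukP a b 1 (C k * X + C l) := by
  right
  have h : 0 < b - a := by linarith
  refine ⟨0, rfl, C (√((k * b + l) / (b - a))), C (√((k * a + l) / (b - a))),
    by simpa using LukB.const _, by simpa using LukB.const _, ?_⟩
  rw [← C_pow, ← C_pow, Real.sq_sqrt (by positivity), Real.sq_sqrt (by positivity)]
  apply Polynomial.funext
  intro x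
  simp
  field_simp
  ring

theorem LukP.sq (a b r : ℝ) : LukP a b 2 ((X - C r) ^ 2) := by
  left
  exact ⟨1, rfl, X - C r, 0, by simpa using LukB.lin r, LukB.zero _, by simp⟩

theorem LukP.quad {a b u N : ℝ} (hab : a < b) (hN : u ^ 2 < N) :
    LukP a b 2 (X ^ 2 - C (2 * u) * X + C N) := by
  obtain ⟨c, hc, hc0⟩ : ∃ c : ℝ, 0 ≤ c ∧
      (2 * u + c * (a + b)) ^ 2 = 4 * (1 + c) * (N + c * (a * b)) := by
    have hK : 0 < (b - a) ^ 2 := by have : 0 < b - a := by linarith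
                                    positivity
    set K := (b - a) ^ 2 with hKd
    set L := 4 * u * (a + b) - 4 * (N + a * b) with hL
    set M := 4 * (N - u ^ 2) with hM
    have hMp : 0 < M := by simp only [hM]; linarith
    have hD : 0 ≤ L ^ 2 + 4 * K * M := by positivity
    have hs := Real.sq_sqrt hD
    have hge : |L| ≤ √(L ^ 2 + 4 * K * M) := by
      apply Real.abs_le_sqrt
      have : 0 < K * M := by positivity
      linarith
    set S := √(L ^ 2 + 4 * K * M) with hS
    have hLS : 0 ≤ -L + S := by have := le_abs_self L; linarith
    refine ⟨(-L + S) / (2 * K), by positivity, ?_⟩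
    set c := (-L + S) / (2 * K) with hcd
    have h1 : 2 * K * c = -L + S := by rw [hcd]; field_simp
    have h2 : K * c ^ 2 + L * c - M = 0 := by
      have h3 : (2 * K * c + L) ^ 2 = L ^ 2 + 4 * K * M := by rw [h1, ← hs]; ring
      have h4 : 4 * K * (K * c ^ 2 + L * c - M) = 0 := by linarith
      rcases mul_eq_zero.1 h4 with h | h
      · linarith
      · exact h
    rw [hKd, hL, hM] at h2
    linarith
  have h1 : 0 < 1 + c := by linarith
  left
  refine ⟨1, rfl, C (√(1 + c)) * (X - C ((2 * u + c * (a + b)) / (2 * (1 + c)))), C (√c),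
    (LukB.const _).mul (LukB.lin _) (by simp), by simpa using LukB.const _, ?_⟩
  rw [mul_pow, ← C_pow, ← C_pow, Real.sq_sqrt h1.le, Real.sq_sqrt hc]
  apply Polynomial.funext
  intro x
  simp
  field_simp
  linear_combination -hc0

theorem Luk_point {a b r : ℝ} (q : ℝ[X]) (hr : r ∈ Set.Ioo a b)
    (h : ∀ x ∈ Set.Ioo a b, x ≠ r → 0 ≤ q.eval x) : 0 ≤ q.eval r := by
  have hc : Filter.Tendsto (fun x => q.eval x) (nhdsWithin r {r}ᶜ) (nhds (q.eval r)) :=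
    q.continuous.continuousAt.tendsto.mono_left nhdsWithin_le_nhds
  refine ge_of_tendsto hc ?_
  filter_upwards [self_mem_nhdsWithin, mem_nhdsWithin_of_mem_nhds (Ioo_mem_nhds hr.1 hr.2)]
    with x h1 h2
  exact h x h2 h1

theorem Luk_zero {a b r : ℝ} (q : ℝ[X]) (hr : r ∈ Set.Ioo a b)
    (h : ∀ x ∈ Set.Ioo a b, 0 ≤ (x - r) * q.eval x) : q.eval r = 0 := by
  apply le_antisymm
  · have hc : Filter.Tendsto (fun x => q.eval x) (nhdsWithin r (Set.Iio r)) (nhds (q.eval r)) :=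
      q.continuous.continuousAt.tendsto.mono_left nhdsWithin_le_nhds
    refine le_of_tendsto hc ?_
    filter_upwards [self_mem_nhdsWithin, mem_nhdsWithin_of_mem_nhds (Ioo_mem_nhds hr.1 hr.2)]
      with x h1 h2
    have := h x h2
    have h1 : x < r := h1
    by_contra! h3
    nlinarith
  · have hc : Filter.Tendsto (fun x => q.eval x) (nhdsWithin r (Set.Ioi r)) (nhds (q.eval r)) :=
      q.continuous.continuousAt.tendsto.mono_left nhdsWithin_le_nhds
    refine ge_of_tendsto hc ?_
    filter_upwards [self_mem_nhdsWithin, mem_nhdsWithin_of_mem_nhds (Ioo_mem_nhds hr.1 hr.2)]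
      with x h1 h2
    have := h x h2
    have h1 : r < x := h1
    by_contra! h3
    nlinarith

theorem Luk_main {a b : ℝ} (hab : a < b) (d : ℕ) : ∀ q : ℝ[X], q ≠ 0 → q.natDegree = d →
    (∀ x ∈ Set.Ioo a b, 0 ≤ q.eval x) → LukP a b d q := by
  induction d using Nat.strong_induction_on with
  | _ d ih =>
  intro q hq0 hd hq
  rcases Nat.eq_zero_or_pos d with rfl | hpos
  · obtain ⟨c, rfl⟩ := natDegree_eq_zero.1 hd
    apply LukP.const
    have := hq ((a + b) / 2) ⟨by linarith, by linarith⟩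
    simpa using this
  obtain ⟨z, hz⟩ : ∃ z : ℂ, aeval z q = 0 := by
    apply IsAlgClosed.exists_aeval_eq_zero
    rw [degree_eq_natDegree hq0, hd]
    exact_mod_cast hpos.ne'
  by_cases him : z.im = 0
  · obtain ⟨r, rfl⟩ : ∃ r : ℝ, z = r := ⟨z.re, Complex.ext rfl (by simpa using him)⟩
    have hr : q.IsRoot r := by
      have h2 : aeval (algebraMap ℝ ℂ r) q = 0 := hz
      rw [aeval_algebraMap_apply] at h2
      simpa using h2
    obtain ⟨p, rfl⟩ := dvd_iff_isRoot.2 hr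
    have hp0 : p ≠ 0 := right_ne_zero_of_mul hq0
    rw [natDegree_mul (X_sub_C_ne_zero r) hp0, natDegree_X_sub_C] at hd
    simp only [eval_mul, eval_sub, eval_X, eval_C] at hq
    rcases le_or_gt r a with hra | hra
    · have h1 : LukP a b 1 (C 1 * X + C (-r)) := LukP.linear hab (by linarith) (by linarith)
      have h2 := ih p.natDegree (by omega) p hp0 rfl (fun x hx => by
        have h3 := hq x hx
        have h4 : 0 < x - r := by linarith [hx.1]
        exact nonneg_of_mul_nonneg_right h3 h4)
      have h3 := h1.mul h2
      rw [hd] at h3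
      convert h3 using 2
      simp [sub_eq_add_neg]
    rcases le_or_gt b r with hrb | hrb
    · have h1 : LukP a b 1 (C (-1) * X + C r) := LukP.linear hab (by linarith) (by linarith)
      have h2 := ih p.natDegree (by omega) (-p) (neg_ne_zero.2 hp0) (natDegree_neg p)
        (fun x hx => by
          have h3 := hq x hx
          have h4 : 0 < r - x := by linarith [hx.2]
          rw [eval_neg]
          refine nonneg_of_mul_nonneg_right (a := r - x) ?_ h4
          linarith)
      have h3 := h1.mul h2
      rw [hd] at h3
      convert h3 using 1
      simp
      ring
    · have hrr : r ∈ Set.Ioo a b := ⟨hra, hrb⟩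
      obtain ⟨p, rfl⟩ := dvd_iff_isRoot.2 (Luk_zero p hrr hq : p.IsRoot r)
      have hp0' : p ≠ 0 := right_ne_zero_of_mul hp0
      rw [natDegree_mul (X_sub_C_ne_zero r) hp0', natDegree_X_sub_C] at hd
      simp only [eval_mul, eval_sub, eval_X, eval_C] at hq
      have hne : ∀ x ∈ Set.Ioo a b, x ≠ r → 0 ≤ p.eval x := fun x hx hxr => by
        have h3 := hq x hx
        have h5 : x - r ≠ 0 := sub_ne_zero.2 hxr
        have h4 : 0 < (x - r) ^ 2 := by positivity
        refine nonneg_of_mul_nonneg_right (a := (x - r) ^ 2) ?_ h4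
        linarith
      have h2 := ih p.natDegree (by omega) p hp0' rfl (fun x hx => by
        by_cases hxr : x = r
        · subst hxr; exact Luk_point p hrr hne
        · exact hne x hx hxr)
      have h3 := (LukP.sq a b r).mul h2
      have h4 : 2 + p.natDegree = d := by omega
      rw [h4] at h3
      convert h3 using 1
      ring
  · obtain ⟨p, hp⟩ := quadratic_dvd_of_aeval_eq_zero_im_ne_zero q hz him
    have hN : z.re ^ 2 < ‖z‖ ^ 2 := by
      rw [Complex.sq_norm, Complex.normSq_apply]
      have : 0 < z.im ^ 2 := by positivity
      linarith
    have hQ := LukP.quad hab hN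
    have hdeg : (X ^ 2 - C (2 * z.re) * X + C (‖z‖ ^ 2)).natDegree = 2 := by compute_degree!
    have hp0 : p ≠ 0 := by rintro rfl; simp at hp; exact hq0 hp
    have hQ0 : (X ^ 2 - C (2 * z.re) * X + C (‖z‖ ^ 2)) ≠ 0 := by
      intro h; rw [h] at hdeg; simp at hdeg
    have hd' : 2 + p.natDegree = d := by
      rw [← hd, hp, natDegree_mul hQ0 hp0, hdeg]
    have h2 := ih p.natDegree (by omega) p hp0 rfl (fun x hx => by
      have h3 := hq x hx
      rw [hp, eval_mul] at h3
      refine nonneg_of_mul_nonneg_right h3 ?_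
      simp only [eval_add, eval_sub, eval_mul, eval_pow, eval_X, eval_C]
      nlinarith [sq_nonneg (x - z.re)])
    have h3 := hQ.mul h2
    rw [hd', ← hp] at h3
    exact h3

theorem LukB.natDegree_le {p : ℝ[X]} {k : ℤ} {d : ℕ} (h : LukB p k) (hk : k ≤ d) :
    p.natDegree ≤ d := by
  rcases h with rfl | h
  · simp
  · omega

/-- Lukács' theorem: a univariate real polynomial of degree d that is
nonnegative on [a,b] admits a weighted sum-of-squares representation adapted to [a,b]. -/
theorem stmt4 (a b : ℝ) (hab : a < b) (q : Polynomial ℝ) (d : ℕ) (hd : q.natDegree = d)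
    (hq : ∀ x : ℝ, a ≤ x → x ≤ b → 0 ≤ q.eval x) :
    ∃ s t : Polynomial ℝ, s.natDegree ≤ d ∧ t.natDegree ≤ d ∧
      (Even d → q = s ^ 2 + (X - C a) * (C b - X) * t ^ 2) ∧
      (Odd d → q = (X - C a) * s ^ 2 + (C b - X) * t ^ 2) := by
  by_cases h0 : q = 0
  · exact ⟨0, 0, by simp, by simp, by simp [h0], by simp [h0]⟩
  rcases Luk_main hab d q h0 hd (fun x hx => hq x hx.1.le hx.2.le) with
    ⟨m, hm, s, t, hs, ht, h⟩ | ⟨m, hm, s, t, hs, ht, h⟩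
  · refine ⟨s, t, hs.natDegree_le (by omega), ht.natDegree_le (by omega), fun _ => h, fun ho => ?_⟩
    obtain ⟨k, hk⟩ := ho
    omega
  · refine ⟨s, t, hs.natDegree_le (by omega), ht.natDegree_le (by omega), fun he => ?_, fun _ => h⟩
    obtain ⟨k, hk⟩ := he
    omega
end

section
/- Fix integers n ≥ ℓ ≥ 1, α ∈ (0,1) with αℓ ∈ ℕ, and identify [n] with ℤ/nℤ. Let A_C be the Johnson-approximating graph operator acting on functions f : [n]^ℓ → ℂ by (A_C f)(x) = E_{b,y}[f(x₁ + b₁y₁, …, x_ℓ + b_ℓ y_ℓ)], where y is uniform in [n]^ℓ and b is uniform among vectors in {0,1}^ℓ of Hamming weight αℓ. Then for every T ∈ [n]^ℓ, the character χ_T is an eigenvector of A_C with eigenvalue λ(T) = C(ℓ−|T|, (1−α)ℓ−|T|) / C(ℓ, (1−α)ℓ) if |T| ≤ (1−α)ℓ, and λ(T) = 0 otherwise, where C(m,k) denotes the binomial coefficient. -/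
open Finset

/-- The character `χ_T(x) = ∏_j exp(2πi·T_j·x_j/n)` on `(ℤ/nℤ)^m`. -/
noncomputable def ugChi (n : ℕ) {m : ℕ} (T x : Fin m → ZMod n) : ℂ :=
  Complex.exp (2 * Real.pi * Complex.I *
    ((∑ j, (T j).val * (x j).val : ℕ) : ℂ) / (n : ℂ))

theorem ugChi_eq_prod (n : ℕ) [NeZero n] {m : ℕ} (T x : Fin m → ZMod n) :
    ugChi n T x = ∏ j, (ZMod.stdAddChar (T j * x j) : ℂ) := by
  have h : ∀ s : Finset (Fin m), ∏ j ∈ s, (ZMod.stdAddChar (T j * x j) : ℂ)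
      = ZMod.stdAddChar (∑ j ∈ s, T j * x j) := by
    intro s
    induction s using Finset.induction_on with
    | empty => simp
    | insert a s ha ih =>
      rw [Finset.prod_insert ha, Finset.sum_insert ha, AddChar.map_add_eq_mul, ih]
  rw [h]
  have h2 : (∑ j, T j * x j) = (((∑ j, (T j).val * (x j).val : ℕ) : ℤ) : ZMod n) := by
    push_cast
    simp
  rw [h2, ZMod.stdAddChar_coe, ugChi]
  norm_cast

theorem sum_noise (n : ℕ) [NeZero n] {m : ℕ} (T x : Fin m → ZMod n) (B : Finset (Fin m)) :
    ∑ y : Fin m → ZMod n, ugChi n T (fun j => x j + if j ∈ B then y j else 0)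
      = (if B ⊆ univ.filter (fun j => T j = 0) then (1 : ℂ) else 0) * (n : ℂ) ^ m
        * ugChi n T x := by
  have h1 : ∀ j, ∑ z : ZMod n, (ZMod.stdAddChar (T j * (x j + if j ∈ B then z else 0)) : ℂ)
      = (if j ∈ B → T j = 0 then (1 : ℂ) else 0) * n * ZMod.stdAddChar (T j * x j) := by
    intro j
    by_cases hj : j ∈ B
    · have := AddChar.sum_mulShift (T j) (ZMod.isPrimitive_stdAddChar n)
      simp only [hj, if_true, mul_add, AddChar.map_add_eq_mul, ← Finset.mul_sum, forall_true_left]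
      simp only [mul_comm _ (T j)] at this
      rw [this]
      by_cases hT : T j = 0 <;> simp [hT, ZMod.card]
    · simp [hj, ZMod.card]
  simp only [ugChi_eq_prod]
  have h2 := (Fintype.prod_sum (fun (j : Fin m) (z : ZMod n) =>
    (ZMod.stdAddChar (T j * (x j + if j ∈ B then z else 0)) : ℂ))).symm
  rw [h2]
  simp only [h1, Finset.prod_mul_distrib]
  congr 2
  · rw [Finset.prod_ite_zero]
    simp [Finset.subset_iff]
  · simp

/-- eigenvalues of the Johnson-approximating graph operator: each character
χ_T is an eigenvector with eigenvalue C(ℓ−|T|, (1−α)ℓ−|T|)/C(ℓ, (1−α)ℓ) if |T| ≤ (1−α)ℓ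
and 0 otherwise, where k = αℓ is the Hamming weight of the noise pattern b. -/
theorem stmt7 (n ℓ k : ℕ) [NeZero n] (hℓ : 1 ≤ ℓ) (hn : ℓ ≤ n)
    (α : ℝ) (hα0 : 0 < α) (hα1 : α < 1) (hk : (k : ℝ) = α * ℓ)
    (T : Fin ℓ → ZMod n) (x : Fin ℓ → ZMod n) :
    (∑ B ∈ univ.filter (fun B : Finset (Fin ℓ) => B.card = k),
        ∑ y : Fin ℓ → ZMod n, ugChi n T (fun j => x j + if j ∈ B then y j else 0))
      / ((Nat.choose ℓ k : ℂ) * (n : ℂ) ^ ℓ)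
    = (if (univ.filter (fun j : Fin ℓ => T j ≠ 0)).card ≤ ℓ - k then
        ((Nat.choose (ℓ - (univ.filter (fun j : Fin ℓ => T j ≠ 0)).card)
            (ℓ - k - (univ.filter (fun j : Fin ℓ => T j ≠ 0)).card) : ℂ)
          / (Nat.choose ℓ (ℓ - k) : ℂ))
      else 0) * ugChi n T x := by
  have hkl : k ≤ ℓ := by
    have h0 : (0 : ℝ) ≤ ℓ := Nat.cast_nonneg _
    have : (k : ℝ) ≤ ℓ := by nlinarith
    exact_mod_cast this
  have hcard : (univ.filter (fun j : Fin ℓ => T j = 0)).card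
      + (univ.filter (fun j : Fin ℓ => T j ≠ 0)).card = ℓ := by
    simpa using Finset.card_filter_add_card_filter_not
      (s := (univ : Finset (Fin ℓ))) (fun j => T j = 0)
  have hcount : ((univ.filter (fun B : Finset (Fin ℓ) => B.card = k)).filter
      (fun B => B ⊆ univ.filter (fun j => T j = 0))).card
      = (univ.filter (fun j : Fin ℓ => T j = 0)).card.choose k := by
    rw [← Finset.card_powersetCard]
    congr 1
    ext B
    simp only [Finset.mem_filter, Finset.mem_powersetCard, Finset.mem_univ, true_and]
    exact and_comm
  simp only [sum_noise, ← Finset.sum_mul]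
  rw [Finset.sum_boole, hcount]
  generalize (univ.filter (fun j : Fin ℓ => T j = 0)).card = a at *
  generalize (univ.filter (fun j : Fin ℓ => T j ≠ 0)).card = s at *
  have hn0 : (n : ℂ) ≠ 0 := Nat.cast_ne_zero.mpr (NeZero.ne n)
  have hc0 : (Nat.choose ℓ k : ℂ) ≠ 0 := Nat.cast_ne_zero.mpr (Nat.choose_pos hkl).ne'
  rw [Nat.choose_symm hkl]
  split_ifs with hs
  · have e1 : ℓ - s = a := by omega
    have e2 : ℓ - k - s = a - k := by omega
    rw [e1, e2, Nat.choose_symm (by omega)]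
    field_simp
  · rw [Nat.choose_eq_zero_of_lt (by omega)]
    simp
end

section
/- Fix integers n ≥ ℓ ≥ 1 and identify [n] with ℤ/nℤ. Let F : [n]^ℓ → ℝ be permutation-invariant. Then for every a ∈ [n], every integer i with 0 ≤ i ≤ ℓ−1, and every X ∈ [n]^i: f_{i+1,F}(a, X) = f_{i, F|_{(a)}}(X) − f_{i,F}(X), where F|_{(a)} : [n]^{ℓ−1} → ℝ is the restriction F|_{(a)}(x₁,…,x_{ℓ−1}) = F(a, x₁,…,x_{ℓ−1}) and f_{i, F|_{(a)}} is its level-i Fourier function (defined with ℓ−1 in place of ℓ). -/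
open Finset

/-- Fourier coefficient `Ĝ(T) = E_x[G(x)·conj(χ_T(x))]`. -/
noncomputable def ugFHat (n ℓ : ℕ) [NeZero n] (F : (Fin ℓ → ZMod n) → ℝ)
    (T : Fin ℓ → ZMod n) : ℂ :=
  (∑ x : Fin ℓ → ZMod n, (F x : ℂ) * (starRingEnd ℂ) (ugChi n T x)) / ((n : ℂ) ^ ℓ)

/-- Padding a tuple of length `i` with zeros to length `ℓ`. -/
def ugPad (n ℓ i : ℕ) (T : Fin i → ZMod n) : Fin ℓ → ZMod n :=
  fun j => if h : (j : ℕ) < i then T ⟨(j : ℕ), h⟩ else 0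

/-- The level-`i` Fourier function `f_{i,G}(x) = Σ_{T ∈ ([n]∖0)^i} Ĝ(T,0,…,0)·χ_T(x)`. -/
noncomputable def ugFlevel (n ℓ : ℕ) [NeZero n] (F : (Fin ℓ → ZMod n) → ℝ) (i : ℕ)
    (x : Fin i → ZMod n) : ℂ :=
  ∑ T ∈ univ.filter (fun T : Fin i → ZMod n => ∀ j, T j ≠ 0),
    ugFHat n ℓ F (ugPad n ℓ i T) * ugChi n T x

/-- Permutation invariance of a function on `(ℤ/nℤ)^ℓ`. -/
def ugPermInv (n ℓ : ℕ) (F : (Fin ℓ → ZMod n) → ℝ) : Prop :=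
  ∀ (σ : Equiv.Perm (Fin ℓ)) (x : Fin ℓ → ZMod n), F (x ∘ σ) = F x

lemma ugChi_eq (n : ℕ) [NeZero n] {m : ℕ} (T x : Fin m → ZMod n) :
    ugChi n T x = ZMod.stdAddChar (∑ j, T j * x j) := by
  have h : (∑ j, T j * x j) = (((∑ j, (T j).val * (x j).val : ℕ) : ℤ) : ZMod n) := by
    push_cast
    simp
  rw [h, ZMod.stdAddChar_coe]
  simp [ugChi]

lemma ugChi_cons (n : ℕ) [NeZero n] {m : ℕ} (t a : ZMod n) (T x : Fin m → ZMod n) :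
    ugChi n (Fin.cons t T : Fin (m + 1) → ZMod n) (Fin.cons a x)
      = ZMod.stdAddChar (t * a) * ugChi n T x := by
  simp only [ugChi_eq, Fin.sum_univ_succ, Fin.cons_zero, Fin.cons_succ, AddChar.map_add_eq_mul]

lemma ugSum_cons (n m : ℕ) [NeZero n] (f : (Fin (m + 1) → ZMod n) → ℂ) :
    ∑ T, f T = ∑ T : Fin m → ZMod n, ∑ t : ZMod n, f (Fin.cons t T) := by
  rw [← (Fin.consEquiv (fun _ : Fin (m + 1) => ZMod n)).sum_comp, Fintype.sum_prod_type,
    Finset.sum_comm]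
  rfl

lemma ug_orth (n : ℕ) [NeZero n] (a b : ZMod n) :
    ∑ t : ZMod n, (starRingEnd ℂ) (ZMod.stdAddChar (t * b)) * ZMod.stdAddChar (t * a)
      = if b = a then (n : ℂ) else 0 := by
  have h := AddChar.sum_mulShift (a - b) (ZMod.isPrimitive_stdAddChar n)
  rw [ZMod.card] at h
  have e : (a - b = 0) ↔ (b = a) := by rw [sub_eq_zero, eq_comm]
  simp only [e] at h
  push_cast at h
  rw [← h]
  refine Finset.sum_congr rfl fun t _ => ?_
  rw [← AddChar.map_neg_eq_conj, ← AddChar.map_add_eq_mul]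
  congr 1
  ring

lemma ugPad_cons (n m i : ℕ) (t : ZMod n) (T : Fin i → ZMod n) :
    ugPad n (m + 1) (i + 1) (Fin.cons t T) = Fin.cons t (ugPad n m i T) := by
  funext j
  refine Fin.cases ?_ (fun j => ?_) j
  · simp only [ugPad, Fin.cons_zero]
    rw [dif_pos (by simp)]
    rfl
  · simp only [ugPad, Fin.cons_succ, Fin.val_succ, Nat.add_lt_add_iff_right]
    split_ifs with h
    · exact Fin.cons_succ (α := fun _ => ZMod n) t T ⟨j, h⟩
    · rfl

lemma ugPad_cycle (n m i : ℕ) (hi : i ≤ m) (T : Fin i → ZMod n) :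
    ugPad n (m + 1) i T =
      (Fin.cons 0 (ugPad n m i T) : Fin (m + 1) → ZMod n)
        ∘ (Fin.cycleRange (⟨i, Nat.lt_succ_of_le hi⟩ : Fin (m + 1))) := by
  funext j
  simp only [Function.comp]
  rcases lt_trichotomy (j : ℕ) i with h | h | h
  · have : Fin.cycleRange (⟨i, Nat.lt_succ_of_le hi⟩ : Fin (m + 1)) j = Fin.succ ⟨j, by omega⟩ := by
      ext
      rw [Fin.coe_cycleRange_of_lt (by exact h)]
      rfl
    rw [this, Fin.cons_succ]
    simp [ugPad, h]
  · have : j = ⟨i, Nat.lt_succ_of_le hi⟩ := Fin.ext h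
    subst this
    simp [ugPad]
  · have : Fin.cycleRange (⟨i, Nat.lt_succ_of_le hi⟩ : Fin (m + 1)) j = Fin.succ ⟨j - 1, by omega⟩ := by
      rw [Fin.cycleRange_of_gt (by exact h)]
      ext
      simp
      omega
    rw [this, Fin.cons_succ]
    simp only [ugPad]
    rw [dif_neg (by omega), dif_neg (by omega)]

lemma ugFHat_perm (n ℓ : ℕ) [NeZero n] (F : (Fin ℓ → ZMod n) → ℝ) (hF : ugPermInv n ℓ F)
    (σ : Equiv.Perm (Fin ℓ)) (T : Fin ℓ → ZMod n) :
    ugFHat n ℓ F (T ∘ σ) = ugFHat n ℓ F T := by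
  unfold ugFHat
  congr 1
  symm
  refine Fintype.sum_equiv (σ.symm.arrowCongr (Equiv.refl _)) _ _ fun x => ?_
  have e : (σ.symm.arrowCongr (Equiv.refl (ZMod n))) x = x ∘ σ := by
    funext j; simp [Equiv.arrowCongr]
  rw [e, hF σ x, ugChi_eq, ugChi_eq]
  congr 3
  exact (Equiv.sum_comp σ (fun j => T j * x j)).symm

lemma ugFHat_restrict (n m : ℕ) [NeZero n] (F : (Fin (m + 1) → ZMod n) → ℝ) (a : ZMod n)
    (T : Fin m → ZMod n) :
    ∑ t : ZMod n, ugFHat n (m + 1) F (Fin.cons t T) * ZMod.stdAddChar (t * a)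
      = ugFHat n m (fun x => F (Fin.cons a x)) T := by
  have hn : (n : ℂ) ≠ 0 := Nat.cast_ne_zero.mpr (NeZero.ne n)
  have key : ∑ t : ZMod n, (∑ x : Fin (m + 1) → ZMod n,
        (F x : ℂ) * (starRingEnd ℂ) (ugChi n (Fin.cons t T) x)) * ZMod.stdAddChar (t * a)
      = (∑ x : Fin m → ZMod n, (F (Fin.cons a x) : ℂ) * (starRingEnd ℂ) (ugChi n T x)) * n := by
    simp only [ugSum_cons, ugChi_cons, map_mul]
    simp only [Finset.sum_mul]
    rw [Finset.sum_comm]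
    refine Finset.sum_congr rfl fun x _ => ?_
    rw [Finset.sum_comm]
    have : ∀ b : ZMod n, ∑ t : ZMod n, (F (Fin.cons b x) : ℂ) *
        ((starRingEnd ℂ) (ZMod.stdAddChar (t * b)) * (starRingEnd ℂ) (ugChi n T x)) *
          ZMod.stdAddChar (t * a)
        = if b = a then (F (Fin.cons b x) : ℂ) * (starRingEnd ℂ) (ugChi n T x) * n else 0 := by
      intro b
      rw [← mul_ite_zero, ← ug_orth, Finset.mul_sum]
      exact Finset.sum_congr rfl fun t _ => by ring
    simp only [this]
    simp
  unfold ugFHat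
  simp only [div_mul_eq_mul_div]
  rw [← Finset.sum_div, key, pow_succ, mul_div_mul_right _ _ hn]

/-- restriction identity `f_{i+1,F}(a, X) = f_{i, F|_{(a)}}(X) − f_{i,F}(X)`
for permutation-invariant `F` on `(ℤ/nℤ)^{m+1}` (here ℓ = m+1 ≥ 1). -/
theorem stmt9 (n m : ℕ) [NeZero n] (hn : m + 1 ≤ n)
    (F : (Fin (m + 1) → ZMod n) → ℝ) (hF : ugPermInv n (m + 1) F)
    (a : ZMod n) (i : ℕ) (hi : i ≤ m) (X : Fin i → ZMod n) :
    ugFlevel n (m + 1) F (i + 1) (Fin.cons a X)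
      = ugFlevel n m (fun x => F (Fin.cons a x)) i X - ugFlevel n (m + 1) F i X := by
  unfold ugFlevel
  rw [← Finset.sum_sub_distrib, Finset.sum_filter, ugSum_cons, Finset.sum_filter]
  refine Finset.sum_congr rfl fun T _ => ?_
  simp only [Fin.forall_fin_succ, Fin.cons_zero, Fin.cons_succ]
  by_cases hT : ∀ j, T j ≠ 0
  · rw [if_pos hT, ← ugFHat_restrict, ugPad_cycle n m i hi T, ugFHat_perm n _ F hF]
    rw [← Finset.add_sum_erase univ _ (Finset.mem_univ (0 : ZMod n)),
      ← Finset.add_sum_erase univ (fun t : ZMod n =>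
        ugFHat n (m + 1) F (Fin.cons t (ugPad n m i T)) * ZMod.stdAddChar (t * a))
        (Finset.mem_univ (0 : ZMod n))]
    simp only [ne_eq, not_true_eq_false, false_and, if_false, zero_add, zero_mul,
      AddChar.map_zero_eq_one, mul_one, add_mul, add_sub_cancel_left, Finset.sum_mul]
    refine Finset.sum_congr rfl fun t ht => ?_
    rw [if_pos ⟨Finset.ne_of_mem_erase ht, hT⟩, ugPad_cons, ugChi_cons, mul_assoc]
  · rw [if_neg hT]
    exact Finset.sum_eq_zero fun t _ => if_neg fun h => hT h.2
end

section
/- Let α ∈ (0,1), let ℓ be a positive integer with αℓ ∈ ℕ and αℓ ≥ 1, and let n ≥ ℓ be an integer; identify [n] with ℤ/nℤ. Let A_C be the Johnson-approximating graph operator, let π be the uniform distribution on [n]^ℓ, and write ⟨f,g⟩_π = E_{x∼π}[f(x)g(x)] and L_C = Id − A_C. Then for every positive integer r ≤ ℓ/2 and every permutation-invariant function F : [n]^ℓ → [0,1]: ⟨F, L_C F⟩_π ≥ (1 − (1−α)^{r+1}) · [ E_π[F] − 8^r · C(ℓ, r) · (Σ_{j=0}^{r} E_{Y ∈ [n]^j}[δ_Y(F)²])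 + B(F) ], where B(F) = E_π[F²] − E_π[F], C(ℓ,r) is the binomial coefficient, and δ_Y(F) = E_{x ∈ [n]^{ℓ−j}}[F(Y, x)]. -/
open Finset

/-- Concatenation of a prefix tuple of length `r` with a suffix tuple of length `ℓ − r`. -/
def ugConcat {α : Type*} (ℓ r : ℕ) (A : Fin r → α) (x : Fin (ℓ - r) → α) : Fin ℓ → α :=
  fun j => if hj : (j : ℕ) < r then A ⟨(j : ℕ), hj⟩
    else x ⟨(j : ℕ) - r, by have h := j.isLt; omega⟩

/-- The restricted density `δ_Y(F) = E_{x ∈ [n]^{ℓ−j}}[F(Y, x)]`. -/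
noncomputable def ugDelta (n ℓ r : ℕ) [NeZero n] (F : (Fin ℓ → ZMod n) → ℝ)
    (A : Fin r → ZMod n) : ℝ :=
  (∑ x : Fin (ℓ - r) → ZMod n, F (ugConcat ℓ r A x)) / (n : ℝ) ^ (ℓ - r)

/-- The Johnson-approximating graph operator on `(ℤ/nℤ)^ℓ` with noise weight `k = αℓ`:
`(A_C f)(x) = E_{b,y}[f(x + b⊙y)]` where `b` is uniform of Hamming weight `k` and `y`
uniform in `[n]^ℓ`. -/
noncomputable def ugACop (n ℓ k : ℕ) [NeZero n] (f : (Fin ℓ → ZMod n) → ℝ)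
    (x : Fin ℓ → ZMod n) : ℝ :=
  (∑ B ∈ univ.filter (fun B : Finset (Fin ℓ) => B.card = k),
      ∑ y : Fin ℓ → ZMod n, f (fun j => x j + if j ∈ B then y j else 0))
    / ((Nat.choose ℓ k : ℝ) * (n : ℝ) ^ ℓ)

section helpers

/-- Merge two tuples: `x` on `S`, `y` off `S`. -/
def ugMerge {n ℓ : ℕ} (S : Finset (Fin ℓ)) (x y : Fin ℓ → ZMod n) : Fin ℓ → ZMod n :=
  fun j => if j ∈ S then x j else y j

/-- swap equivalence -/
def ugSwap {n ℓ : ℕ} (S : Finset (Fin ℓ)) :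
    ((Fin ℓ → ZMod n) × (Fin ℓ → ZMod n)) ≃ ((Fin ℓ → ZMod n) × (Fin ℓ → ZMod n)) where
  toFun p := (ugMerge S p.1 p.2, ugMerge S p.2 p.1)
  invFun p := (ugMerge S p.1 p.2, ugMerge S p.2 p.1)
  left_inv p := by
    ext j <;> by_cases h : j ∈ S <;> simp [ugMerge, h]
  right_inv p := by
    ext j <;> by_cases h : j ∈ S <;> simp [ugMerge, h]

/-- averaging operator -/
noncomputable def ugT {n ℓ : ℕ} [NeZero n] (S : Finset (Fin ℓ)) (f : (Fin ℓ → ZMod n) → ℝ)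
    (x : Fin ℓ → ZMod n) : ℝ :=
  (∑ y : Fin ℓ → ZMod n, f (ugMerge S x y)) / (n : ℝ) ^ ℓ

variable {n ℓ : ℕ} [NeZero n]

lemma ug_swap_sum (S : Finset (Fin ℓ)) (G : (Fin ℓ → ZMod n) → (Fin ℓ → ZMod n) → ℝ) :
    ∑ x, ∑ y, G (ugMerge S x y) (ugMerge S y x) = ∑ x, ∑ y, G x y := by
  have := (ugSwap (n := n) S).sum_comp (fun p => G p.1 p.2)
  rw [Fintype.sum_prod_type, Fintype.sum_prod_type] at this
  exact this

lemma ug_card : (Fintype.card (Fin ℓ → ZMod n) : ℝ) = (n : ℝ) ^ ℓ := by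
  simp [ZMod.card]

lemma ug_N_ne (m : ℕ) : ((n : ℝ) ^ m) ≠ 0 := by
  have : (n : ℝ) ≠ 0 := Nat.cast_ne_zero.mpr (NeZero.ne n)
  positivity

lemma ug_N_pos (m : ℕ) : 0 < ((n : ℝ) ^ m) := by
  have : 0 < n := Nat.pos_of_ne_zero (NeZero.ne n)
  positivity

lemma ug_merge_sum (U : Finset (Fin ℓ)) (g : (Fin ℓ → ZMod n) → ℝ) :
    ∑ y, ∑ z, g (ugMerge U y z) = (n : ℝ) ^ ℓ * ∑ y, g y := by
  rw [ug_swap_sum U (fun a _ => g a)]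
  simp [Finset.mul_sum, ZMod.card]

lemma ugT_T (S U : Finset (Fin ℓ)) (f : (Fin ℓ → ZMod n) → ℝ) (x : Fin ℓ → ZMod n) :
    ugT S (ugT U f) x = ugT (U ∩ S) f x := by
  unfold ugT
  rw [← Finset.sum_div]
  have : ∑ y : Fin ℓ → ZMod n, ∑ z : Fin ℓ → ZMod n, f (ugMerge U (ugMerge S x y) z)
      = (n : ℝ) ^ ℓ * ∑ y, f (ugMerge (U ∩ S) x y) := by
    rw [← ug_merge_sum U (fun w => f (ugMerge (U ∩ S) x w))]
    refine Finset.sum_congr rfl fun y _ => Finset.sum_congr rfl fun z _ => ?_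
    congr 1
    ext j
    by_cases h : j ∈ S <;> by_cases h' : j ∈ U <;> simp [ugMerge, h, h']
  rw [this]
  have := ug_N_ne (n := n) ℓ
  field_simp

lemma ugT_adj (S : Finset (Fin ℓ)) (f g : (Fin ℓ → ZMod n) → ℝ) :
    ∑ x, ugT S f x * g x = ∑ x, f x * ugT S g x := by
  unfold ugT
  simp only [div_mul_eq_mul_div, mul_div_assoc', ← Finset.sum_div, Finset.sum_mul, Finset.mul_sum]
  congr 1
  rw [← ug_swap_sum S]
  refine Finset.sum_congr rfl fun y _ => Finset.sum_congr rfl fun z _ => ?_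
  congr 2
  ext j
  by_cases h : j ∈ S <;> simp [ugMerge, h]

lemma ugT_sum {ι : Type*} (s : Finset ι) (S : Finset (Fin ℓ)) (c : ι → ℝ)
    (f : ι → (Fin ℓ → ZMod n) → ℝ) (x : Fin ℓ → ZMod n) :
    ugT S (fun x => ∑ i ∈ s, c i * f i x) x = ∑ i ∈ s, c i * ugT S (f i) x := by
  unfold ugT
  simp only [mul_div_assoc', ← Finset.sum_div, Finset.mul_sum]
  rw [Finset.sum_comm]

/-- Efron-Stein component -/
noncomputable def ugD (S : Finset (Fin ℓ)) (f : (Fin ℓ → ZMod n) → ℝ)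
    (x : Fin ℓ → ZMod n) : ℝ :=
  ∑ T ∈ S.powerset, (-1 : ℝ) ^ (S.card + T.card) * ugT T f x

omit [NeZero n] in
lemma ug_mobius (T : Finset (Fin ℓ)) : ∀ g : Finset (Fin ℓ) → ℝ,
    ∑ S ∈ T.powerset, ∑ U ∈ S.powerset, (-1 : ℝ) ^ (S.card + U.card) * g U = g T := by
  induction T using Finset.induction_on with
  | empty => intro g; simp
  | insert i T hi ih =>
    intro g
    rw [Finset.sum_powerset_insert hi, ← Finset.sum_add_distrib, ← ih (fun U => g (insert i U))]
    refine Finset.sum_congr rfl fun S hS => ?_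
    have hiS : i ∉ S := fun h => hi (Finset.mem_powerset.1 hS h)
    rw [Finset.sum_powerset_insert hiS, ← add_assoc, ← Finset.sum_add_distrib,
      Finset.sum_eq_zero, zero_add]
    · refine Finset.sum_congr rfl fun U hU => ?_
      have hiU : i ∉ U := fun h => hiS (Finset.mem_powerset.1 hU h)
      rw [Finset.card_insert_of_notMem hiS, Finset.card_insert_of_notMem hiU]
      ring
    · intro U hU
      rw [Finset.card_insert_of_notMem hiS]
      ring

omit [NeZero n] in
lemma ug_annih (S U : Finset (Fin ℓ)) (h : ¬ S ⊆ U) (g : Finset (Fin ℓ) → ℝ) :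
    ∑ T ∈ S.powerset, (-1 : ℝ) ^ (S.card + T.card) * g (T ∩ U) = 0 := by
  obtain ⟨i, hiS, hiU⟩ := Finset.not_subset.1 h
  obtain ⟨S', hi, rfl⟩ : ∃ S', i ∉ S' ∧ S = insert i S' :=
    ⟨S.erase i, by simp, by simp [Finset.insert_erase hiS]⟩
  rw [Finset.sum_powerset_insert hi, ← Finset.sum_add_distrib]
  refine Finset.sum_eq_zero fun T hT => ?_
  have hiT : i ∉ T := fun h => hi (Finset.mem_powerset.1 hT h)
  rw [Finset.card_insert_of_notMem hiT, Finset.insert_inter_of_notMem hiU]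
  ring

lemma ugT_D (S U : Finset (Fin ℓ)) (hU : U ⊆ S) (f : (Fin ℓ → ZMod n) → ℝ)
    (x : Fin ℓ → ZMod n) : ugT U (ugD S f) x = if U = S then ugD S f x else 0 := by
  have h1 : ugT U (ugD S f) x
      = ∑ T ∈ S.powerset, (-1 : ℝ) ^ (S.card + T.card) * ugT (T ∩ U) f x := by
    unfold ugD
    rw [ugT_sum]
    simp only [ugT_T]
  rw [h1]
  split_ifs with h
  · subst h
    refine Finset.sum_congr rfl fun T hT => ?_
    rw [Finset.inter_eq_left.2 (Finset.mem_powerset.1 hT)]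
  · exact ug_annih S U (fun h' => h (hU.antisymm h')) (fun V => ugT V f x)

lemma ugD_sq (S : Finset (Fin ℓ)) (f : (Fin ℓ → ZMod n) → ℝ) :
    ∑ x, f x * ugD S f x = ∑ x, (ugD S f x) ^ 2 := by
  have h1 : ∑ x, (ugD S f x) ^ 2 = ∑ T ∈ S.powerset, (-1 : ℝ) ^ (S.card + T.card) *
      ∑ x, ugT T f x * ugD S f x := by
    simp only [Finset.mul_sum]
    rw [Finset.sum_comm]
    refine Finset.sum_congr rfl fun x _ => ?_
    rw [sq]
    nth_rewrite 1 [ugD]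
    rw [Finset.sum_mul]
    exact Finset.sum_congr rfl fun _ _ => by ring
  rw [h1, Finset.sum_eq_single S]
  · rw [ugT_adj]
    simp [ugT_D, ← two_mul]
  · intro T hT hne
    rw [ugT_adj, Finset.sum_eq_zero, mul_zero]
    intro x _
    rw [ugT_D S T (Finset.mem_powerset.1 hT), if_neg hne, mul_zero]
  · intro h
    simp at h

/-- level weights -/
noncomputable def uga (f : (Fin ℓ → ZMod n) → ℝ) (S : Finset (Fin ℓ)) : ℝ :=
  ∑ x, (ugD S f x) ^ 2

lemma uga_nonneg (f : (Fin ℓ → ZMod n) → ℝ) (S : Finset (Fin ℓ)) : 0 ≤ uga f S :=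
  Finset.sum_nonneg fun _ _ => sq_nonneg _

/-- quadratic form -/
noncomputable def ugW (f : (Fin ℓ → ZMod n) → ℝ) (S : Finset (Fin ℓ)) : ℝ :=
  ∑ x, f x * ugT S f x

lemma ugW_eq (f : (Fin ℓ → ZMod n) → ℝ) (S : Finset (Fin ℓ)) :
    ugW f S = ∑ U ∈ S.powerset, uga f U := by
  unfold ugW uga
  simp only [← ugD_sq]
  rw [Finset.sum_comm]
  refine Finset.sum_congr rfl fun x _ => ?_
  rw [← Finset.mul_sum]
  congr 1
  exact (ug_mobius S (fun U => ugT U f x)).symm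

lemma ugW_sq (f : (Fin ℓ → ZMod n) → ℝ) (S : Finset (Fin ℓ)) :
    ugW f S = ∑ x, (ugT S f x) ^ 2 := by
  have h := ugT_adj S f (ugT S f)
  simp only [ugT_T, Finset.inter_self] at h
  simp only [sq]
  rw [h, ugW]

lemma ugW_univ (f : (Fin ℓ → ZMod n) → ℝ) : ugW f univ = ∑ x, f x ^ 2 := by
  unfold ugW ugT
  refine Finset.sum_congr rfl fun x _ => ?_
  have h := ug_N_ne (n := n) ℓ
  have h2 : ∀ y, ugMerge univ x y = x := fun y => by ext j; simp [ugMerge]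
  simp only [h2, Finset.sum_const, nsmul_eq_mul, Finset.card_univ, ug_card]
  rw [mul_div_cancel_left₀ _ h, sq]

lemma ugA_eq (k : ℕ) (f : (Fin ℓ → ZMod n) → ℝ) (x : Fin ℓ → ZMod n) :
    ugACop n ℓ k f x
      = (∑ B ∈ univ.filter (fun B : Finset (Fin ℓ) => B.card = k), ugT Bᶜ f x)
        / (Nat.choose ℓ k : ℝ) := by
  unfold ugACop ugT
  rw [← Finset.sum_div, div_div, mul_comm]
  congr 1
  refine Finset.sum_congr rfl fun B _ => ?_
  rw [← Equiv.sum_comp (Equiv.addLeft x) (fun y => f (ugMerge Bᶜ x y))]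
  refine Finset.sum_congr rfl fun y _ => ?_
  congr 1
  ext j
  by_cases h : j ∈ B <;> simp [ugMerge, h]

omit [NeZero n] in
lemma ug_count (k : ℕ) (S : Finset (Fin ℓ)) :
    ((univ.filter (fun B : Finset (Fin ℓ) => B.card = k)).filter (fun B => S ⊆ Bᶜ)).card
      = Nat.choose (ℓ - S.card) k := by
  have : (univ.filter (fun B : Finset (Fin ℓ) => B.card = k)).filter (fun B => S ⊆ Bᶜ)
      = Finset.powersetCard k Sᶜ := by
    ext B
    simp only [Finset.mem_filter, Finset.mem_univ, true_and, Finset.mem_powersetCard]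
    rw [Finset.subset_compl_comm]
    tauto
  rw [this, Finset.card_powersetCard, Finset.card_compl, Fintype.card_fin]

lemma ugA_form (k : ℕ) (f : (Fin ℓ → ZMod n) → ℝ) :
    ∑ x, f x * ugACop n ℓ k f x
      = ∑ S, (Nat.choose (ℓ - S.card) k : ℝ) / (Nat.choose ℓ k : ℝ) * uga f S := by
  simp only [ugA_eq, mul_div_assoc', ← Finset.sum_div, Finset.mul_sum, div_mul_eq_mul_div]
  congr 1
  rw [Finset.sum_comm]
  have : ∀ B ∈ univ.filter (fun B : Finset (Fin ℓ) => B.card = k),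
      ∑ x, f x * ugT Bᶜ f x = ∑ S, if S ⊆ Bᶜ then uga f S else 0 := by
    intro B _
    rw [← Finset.sum_filter]
    refine (ugW_eq f Bᶜ).trans (Finset.sum_congr ?_ fun _ _ => rfl)
    ext S; simp
  rw [Finset.sum_congr rfl this, Finset.sum_comm]
  refine Finset.sum_congr rfl fun S _ => ?_
  rw [← Finset.sum_filter, Finset.sum_const, ug_count, nsmul_eq_mul]

omit [NeZero n] in
lemma ug_ratio (k : ℕ) (hℓ : 1 ≤ ℓ) (hkℓ : k ≤ ℓ) (α : ℝ) (hα1 : α < 1)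
    (hk : (k : ℝ) = α * ℓ) (s : ℕ) (hs : s ≤ ℓ) :
    (Nat.choose (ℓ - s) k : ℝ) ≤ (1 - α) ^ s * (Nat.choose ℓ k : ℝ) := by
  induction s with
  | zero => simp
  | succ s ih =>
    have ih := ih (by omega)
    obtain ⟨m, hm⟩ : ∃ m, ℓ = m + 1 + s := ⟨ℓ - s - 1, by omega⟩
    have e1 : ℓ - (s + 1) = m := by omega
    have e2 : ℓ - s = m + 1 := by omega
    rw [e1]
    rw [e2] at ih
    by_cases hkm : k ≤ m
    · have h := Nat.choose_mul_succ_eq m k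
      have h' : (m.choose k : ℝ) * (m + 1) = (m + 1).choose k * ((m : ℝ) + 1 - k) := by
        have : ((m + 1 - k : ℕ) : ℝ) = (m : ℝ) + 1 - k := by
          rw [Nat.cast_sub (by omega)]; push_cast; ring
        rw [← this]
        exact_mod_cast h
      have hℓ' : (m : ℝ) + 1 ≤ ℓ := by rw [hm]; push_cast; linarith [Nat.cast_nonneg (α := ℝ) s]
      have hα0 : 0 ≤ α := by
        by_contra hneg
        have : (0:ℝ) < ℓ := by exact_mod_cast hℓ
        have : (0:ℝ) ≤ k := Nat.cast_nonneg k
        nlinarith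
      have h2 : (m : ℝ) + 1 - k ≤ (1 - α) * (m + 1) := by rw [hk]; nlinarith
      have h3 : (m.choose k : ℝ) * (m + 1) ≤ ((1 - α) * (m + 1).choose k) * (m + 1) := by
        rw [h']
        have : (0:ℝ) ≤ (m + 1).choose k := Nat.cast_nonneg _
        nlinarith
      have h4 := le_of_mul_le_mul_right h3 (by positivity)
      have : (1 - α) * ((m + 1).choose k : ℝ) ≤ (1 - α) * ((1 - α) ^ s * ℓ.choose k) :=
        mul_le_mul_of_nonneg_left ih (by linarith)
      calc _ ≤ _ := h4
        _ ≤ _ := this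
        _ = _ := by ring
    · rw [Nat.choose_eq_zero_of_lt (by omega)]
      have : 0 ≤ 1 - α := by linarith
      simp only [Nat.cast_zero]
      positivity

/-- concatenation as an equivalence -/
def ugConcatEquiv (n ℓ j : ℕ) (hj : j ≤ ℓ) :
    ((Fin j → ZMod n) × (Fin (ℓ - j) → ZMod n)) ≃ (Fin ℓ → ZMod n) where
  toFun p := ugConcat ℓ j p.1 p.2
  invFun x := (fun i => x ⟨i, by have := i.isLt; omega⟩, fun i => x ⟨i + j, by have := i.isLt; omega⟩)
  left_inv p := by
    ext i <;> simp [ugConcat]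
  right_inv x := by
    ext i
    by_cases h : (i : ℕ) < j
    · simp [ugConcat, h]
    · simp [ugConcat, h, Nat.sub_add_cancel (not_lt.1 h)]

lemma ug_concat_sum (j : ℕ) (hj : j ≤ ℓ) (G : (Fin ℓ → ZMod n) → ℝ) :
    ∑ x, G x = ∑ A : Fin j → ZMod n, ∑ z, G (ugConcat ℓ j A z) := by
  rw [← (ugConcatEquiv n ℓ j hj).sum_comp, Fintype.sum_prod_type]
  rfl

lemma ugT_delta (j : ℕ) (hj : j ≤ ℓ) (F : (Fin ℓ → ZMod n) → ℝ) (A : Fin j → ZMod n)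
    (z : Fin (ℓ - j) → ZMod n) :
    ugT (univ.filter fun i : Fin ℓ => (i : ℕ) < j) F (ugConcat ℓ j A z) = ugDelta n ℓ j F A := by
  unfold ugT ugDelta
  rw [ug_concat_sum j hj]
  have : ∀ (A' : Fin j → ZMod n) (z' : Fin (ℓ - j) → ZMod n),
      ugMerge (univ.filter fun i : Fin ℓ => (i : ℕ) < j) (ugConcat ℓ j A z) (ugConcat ℓ j A' z')
        = ugConcat ℓ j A z' := by
    intro A' z'
    ext i
    by_cases h : (i : ℕ) < j <;> simp [ugMerge, ugConcat, h]
  simp only [this, Finset.sum_const, nsmul_eq_mul, Finset.card_univ, ug_card]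
  have h1 : (n : ℝ) ^ ℓ = (n : ℝ) ^ j * (n : ℝ) ^ (ℓ - j) := by
    rw [← pow_add]; congr 1; omega
  rw [h1, mul_div_mul_left _ _ (ug_N_ne j)]

lemma ugW_init (j : ℕ) (hj : j ≤ ℓ) (F : (Fin ℓ → ZMod n) → ℝ) :
    ugW F (univ.filter fun i : Fin ℓ => (i : ℕ) < j) / (n : ℝ) ^ ℓ
      = (∑ Y : Fin j → ZMod n, (ugDelta n ℓ j F Y) ^ 2) / (n : ℝ) ^ j := by
  rw [ugW_sq, ug_concat_sum j hj]
  simp only [ugT_delta j hj, Finset.sum_const, nsmul_eq_mul, Finset.card_univ, ug_card]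
  have h1 : (n : ℝ) ^ ℓ = (n : ℝ) ^ (ℓ - j) * (n : ℝ) ^ j := by
    rw [← pow_add]; congr 1; omega
  rw [h1, ← Finset.mul_sum, mul_div_mul_left _ _ (ug_N_ne _)]

lemma ugW_perm (F : (Fin ℓ → ZMod n) → ℝ) (hF : ugPermInv n ℓ F) (S S' : Finset (Fin ℓ))
    (h : S.card = S'.card) : ugW F S = ugW F S' := by
  let e : {x // x ∈ S} ≃ {x // x ∈ S'} := Finset.equivOfCardEq h
  let σ : Equiv.Perm (Fin ℓ) := e.extendSubtype
  have hσ : ∀ i, σ i ∈ S' ↔ i ∈ S := fun i =>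
    ⟨fun h1 => by
      by_contra h2
      exact e.extendSubtype_not_mem i h2 h1, fun h1 => e.extendSubtype_mem i h1⟩
  unfold ugW ugT
  rw [← (Equiv.arrowCongr σ.symm (Equiv.refl (ZMod n))).sum_comp]
  refine Finset.sum_congr rfl fun x _ => ?_
  rw [← (Equiv.arrowCongr σ.symm (Equiv.refl (ZMod n))).sum_comp]
  have hc : ∀ y : Fin ℓ → ZMod n, (Equiv.arrowCongr σ.symm (Equiv.refl (ZMod n))) y = y ∘ σ := by
    intro y; ext i; simp
  simp only [hc, hF σ x]
  congr 2
  refine Finset.sum_congr rfl fun y _ => ?_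
  rw [← hF σ (ugMerge S' x y)]
  congr 1
  ext i
  simp [ugMerge, hσ]

end helpers

/-- structure theorem for the Johnson-approximating graph: every
permutation-invariant `F : [n]^ℓ → [0,1]` not correlated with any `r`-restricted subcube
has high expansion. -/
theorem stmt13 (n ℓ k : ℕ) [NeZero n] (hℓ : 1 ≤ ℓ) (hn : ℓ ≤ n) (hk1 : 1 ≤ k)
    (α : ℝ) (hα0 : 0 < α) (hα1 : α < 1) (hk : (k : ℝ) = α * ℓ)
    (r : ℕ) (hr1 : 1 ≤ r) (hr : 2 * r ≤ ℓ)
    (F : (Fin ℓ → ZMod n) → ℝ) (hF01 : ∀ x, 0 ≤ F x ∧ F x ≤ 1)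
    (hFinv : ugPermInv n ℓ F) :
    (∑ x : Fin ℓ → ZMod n, F x * (F x - ugACop n ℓ k F x)) / (n : ℝ) ^ ℓ
      ≥ (1 - (1 - α) ^ (r + 1)) *
          ((∑ x : Fin ℓ → ZMod n, F x) / (n : ℝ) ^ ℓ
            - 8 ^ r * (Nat.choose ℓ r : ℝ) *
                (∑ j ∈ Finset.range (r + 1),
                  (∑ Y : Fin j → ZMod n, (ugDelta n ℓ j F Y) ^ 2) / (n : ℝ) ^ j)
            + ((∑ x : Fin ℓ → ZMod n, (F x) ^ 2) / (n : ℝ) ^ ℓ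
                - (∑ x : Fin ℓ → ZMod n, F x) / (n : ℝ) ^ ℓ)) := by

  have hkℓ : k ≤ ℓ := by
    have : (0:ℝ) ≤ ℓ := Nat.cast_nonneg ℓ
    have : (k : ℝ) ≤ ℓ := by rw [hk]; nlinarith
    exact_mod_cast this
  have hN := ug_N_pos (n := n) ℓ
  have hC : (0:ℝ) < Nat.choose ℓ k := by exact_mod_cast Nat.choose_pos hkℓ
  set c : ℝ := 1 - (1 - α) ^ (r + 1) with hc
  have hc0 : 0 ≤ c := by
    have : (1 - α) ^ (r + 1) ≤ 1 := pow_le_one₀ (by linarith) (by linarith)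
    linarith
  set D : ℕ → ℝ := fun j => (∑ Y : Fin j → ZMod n, (ugDelta n ℓ j F Y) ^ 2) / (n : ℝ) ^ j with hD
  have hD0 : ∀ j, 0 ≤ D j := fun j =>
    div_nonneg (Finset.sum_nonneg fun _ _ => sq_nonneg _) (ug_N_pos j).le
  have hsq : ∑ x, F x ^ 2 = ∑ S, uga F S := by
    rw [← ugW_univ, ugW_eq, Finset.powerset_univ]
  have hlhs : ∑ x, F x * (F x - ugACop n ℓ k F x)
      = ∑ S, (1 - (Nat.choose (ℓ - S.card) k : ℝ) / (Nat.choose ℓ k : ℝ)) * uga F S := by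
    simp only [mul_sub, sub_mul, Finset.sum_sub_distrib, one_mul, ugA_form, ← hsq, sq]
  -- low-degree part
  have hlow : ∀ S : Finset (Fin ℓ), uga F S ≤ (n : ℝ) ^ ℓ * D S.card := by
    intro S
    have hS : S.card ≤ ℓ := by simpa using S.card_le_univ
    have h1 : uga F S ≤ ugW F S := by
      rw [ugW_eq]
      exact Finset.single_le_sum (f := fun U => uga F U) (fun U _ => uga_nonneg F U)
        (Finset.mem_powerset_self S)
    have h2 : ugW F S = ugW F (univ.filter fun i : Fin ℓ => (i : ℕ) < S.card) := by
      apply ugW_perm F hFinv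
      rw [Fin.card_filter_val_lt, min_eq_right hS]
    have h3 := ugW_init (n := n) S.card hS F
    rw [← h2, div_eq_iff hN.ne'] at h3
    rw [mul_comm]
    exact h1.trans h3.le
  have hlowsum : ∑ S ∈ univ.filter (fun S : Finset (Fin ℓ) => S.card ≤ r), uga F S
      ≤ (n : ℝ) ^ ℓ * (8 ^ r * (Nat.choose ℓ r : ℝ) * ∑ j ∈ Finset.range (r + 1), D j) := by
    rw [← Finset.sum_fiberwise_of_maps_to (s := univ.filter (fun S : Finset (Fin ℓ) => S.card ≤ r))
      (t := Finset.range (r + 1)) (g := fun S => S.card)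
      (fun S hS => by simpa [Nat.lt_succ_iff] using hS), Finset.mul_sum, Finset.mul_sum]
    refine Finset.sum_le_sum fun j hj => ?_
    have hjr : j ≤ r := by simpa [Nat.lt_succ_iff] using hj
    have hfil : (univ.filter (fun S : Finset (Fin ℓ) => S.card ≤ r)).filter (fun S => S.card = j)
        = Finset.powersetCard j univ := by
      ext S
      simp only [Finset.mem_filter, Finset.mem_univ, true_and, Finset.mem_powersetCard,
        Finset.subset_univ]
      omega
    rw [hfil]
    have h1 : ∑ S ∈ Finset.powersetCard j (univ : Finset (Fin ℓ)), uga F S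
        ≤ ∑ S ∈ Finset.powersetCard j (univ : Finset (Fin ℓ)), (n : ℝ) ^ ℓ * D j := by
      refine Finset.sum_le_sum fun S hS => ?_
      rw [← (Finset.mem_powersetCard.1 hS).2]
      exact hlow S
    refine h1.trans ?_
    rw [Finset.sum_const, Finset.card_powersetCard, Finset.card_univ, Fintype.card_fin,
      nsmul_eq_mul]
    have h2 : (Nat.choose ℓ j : ℝ) ≤ Nat.choose ℓ r := by
      have hmono : ∀ i, i ≤ r → ∀ i', i' ≤ i → Nat.choose ℓ i' ≤ Nat.choose ℓ i := by
        intro i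
        induction i with
        | zero => intro _ i' h'; rw [Nat.le_zero.1 h']
        | succ i ih =>
          intro hi i' h'
          rcases Nat.lt_or_ge i i' with h | h
          · rw [show i' = i + 1 by omega]
          · exact (ih (by omega) i' h).trans (Nat.choose_le_succ_of_lt_half_left (by omega))
      exact_mod_cast hmono r le_rfl j hjr
    have h3 : (1:ℝ) ≤ 8 ^ r := one_le_pow₀ (by norm_num)
    have h4 : (Nat.choose ℓ j : ℝ) ≤ 8 ^ r * Nat.choose ℓ r := by
      have : (0:ℝ) ≤ Nat.choose ℓ r := Nat.cast_nonneg _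
      nlinarith
    have h5 := mul_le_mul_of_nonneg_right h4 (mul_nonneg hN.le (hD0 j))
    linarith
  have hterm : ∀ S : Finset (Fin ℓ), c * uga F S - (if S.card ≤ r then c * uga F S else 0)
      ≤ (1 - (Nat.choose (ℓ - S.card) k : ℝ) / (Nat.choose ℓ k : ℝ)) * uga F S := by
    intro S
    have hS : S.card ≤ ℓ := by simpa using S.card_le_univ
    have hp := ug_ratio k hℓ hkℓ α hα1 hk S.card hS
    rw [← div_le_iff₀ hC] at hp
    have ha := uga_nonneg F S
    split_ifs with h
    · rw [sub_self]
      have : (1 - α) ^ S.card ≤ 1 := pow_le_one₀ (by linarith) (by linarith)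
      exact mul_nonneg (by linarith) ha
    · rw [sub_zero]
      have : (1 - α) ^ S.card ≤ (1 - α) ^ (r + 1) :=
        pow_le_pow_of_le_one (by linarith) (by linarith) (by omega)
      exact mul_le_mul_of_nonneg_right (by linarith) ha
  have hsum := Finset.sum_le_sum (s := univ) fun S _ => hterm S
  rw [Finset.sum_sub_distrib, ← Finset.sum_filter, ← Finset.mul_sum, ← Finset.mul_sum, ← hlhs,
    ← hsq] at hsum
  rw [ge_iff_le, le_div_iff₀ hN]
  have h6 := mul_le_mul_of_nonneg_left hlowsum hc0
  have h7 : (c * ((∑ x, F x) / (n : ℝ) ^ ℓ - 8 ^ r * (Nat.choose ℓ r : ℝ) *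
      ∑ j ∈ Finset.range (r + 1), D j + ((∑ x, F x ^ 2) / (n : ℝ) ^ ℓ
        - (∑ x, F x) / (n : ℝ) ^ ℓ))) * (n : ℝ) ^ ℓ
      = c * ∑ x, F x ^ 2 - c * ((n : ℝ) ^ ℓ * (8 ^ r * (Nat.choose ℓ r : ℝ) *
        ∑ j ∈ Finset.range (r + 1), D j)) := by
    field_simp
    ring
  rw [h7]
  linarith
end

section
/- Let α ∈ (0,1/2) with αℓ ∈ ℕ and αℓ ≥ 1, let ℓ ≥ 1 and n ≥ 2ℓ be integers, and let J = J_{n,ℓ,α} be the Johnson graph. Let π be the uniform distribution on the vertices of J and ⟨F, L_J F⟩_π = (1/2)·E_{(U,V)}[(F(U) − F(V))²], the expectation over a uniformly random ordered edge (U,V) of J. Then for every integer r with 0 ≤ r ≤ ℓ/2 and every F : V(J) → [0,1]: ⟨F, L_J F⟩_π ≥ (1 − (1−α)^{r+1}) · [ (1 − ℓ²/n)·E_π[F] − 8^r · C(ℓ, r) · (Σ_{j=0}^{r} E_{Y}[δ_Y(F)²]) + E_π[F²] − E_π[F] ] − ((2ℓ² + ℓ)/(2n))·E_π[F], where for each j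 the inner expectation is over a uniformly random j-element subset Y of {1,…,n}, δ_Y(F) is the average of F(S) over ℓ-element subsets S ⊇ Y, and C(ℓ,r) is the binomial coefficient. -/
open Finset

/-- The (ordered) edge set of the Johnson graph `J_{n,ℓ,α}` with `k = αℓ`: pairs of
ℓ-element subsets intersecting in exactly `ℓ − k` elements. -/
def ugJEdges (n ℓ k : ℕ) : Finset (Finset (Fin n) × Finset (Fin n)) :=
  univ.filter (fun p => p.1.card = ℓ ∧ p.2.card = ℓ ∧ (p.1 ∩ p.2).card = ℓ - k)

/-- The Laplacian quadratic form `⟨F, L_J F⟩_π = (1/2)·E_{(U,V)}[(F U − F V)²]` over a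
uniformly random ordered edge of the Johnson graph. -/
noncomputable def ugJLap (n ℓ k : ℕ) (F : Finset (Fin n) → ℝ) : ℝ :=
  (1 / 2) * ((∑ p ∈ ugJEdges n ℓ k, (F p.1 - F p.2) ^ 2) / ((ugJEdges n ℓ k).card : ℝ))

/-- The average `E_π[F]` of `F` over the vertices (ℓ-element subsets of [n]). -/
noncomputable def ugJAvg (n ℓ : ℕ) (F : Finset (Fin n) → ℝ) : ℝ :=
  (∑ S ∈ univ.filter (fun S : Finset (Fin n) => S.card = ℓ), F S) / (Nat.choose n ℓ : ℝ)

/-- The restricted density `δ_Y(F)`: the average of `F(S)` over ℓ-element sets `S ⊇ Y`. -/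
noncomputable def ugJDelta (n ℓ : ℕ) (F : Finset (Fin n) → ℝ) (Y : Finset (Fin n)) : ℝ :=
  (∑ S ∈ univ.filter (fun S : Finset (Fin n) => S.card = ℓ ∧ Y ⊆ S), F S)
    / (Nat.choose (n - Y.card) (ℓ - Y.card) : ℝ)


noncomputable section JohnsonAux

/-- Unnormalised up operator. -/
def jU (n : ℕ) : (Finset (Fin n) → ℝ) →ₗ[ℝ] (Finset (Fin n) → ℝ) where
  toFun f := fun S => ∑ x ∈ S, f (S.erase x)
  map_add' f g := by ext S; simp [sum_add_distrib]
  map_smul' c f := by ext S; simp [mul_sum]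

/-- Unnormalised down operator. -/
def jD (n : ℕ) : (Finset (Fin n) → ℝ) →ₗ[ℝ] (Finset (Fin n) → ℝ) where
  toFun f := fun S => ∑ x ∈ Sᶜ, f (insert x S)
  map_add' f g := by ext S; simp [sum_add_distrib]
  map_smul' c f := by ext S; simp [mul_sum]

/-- Unnormalised inner product. -/
def jip {n : ℕ} (f g : Finset (Fin n) → ℝ) : ℝ := ∑ S, f S * g S

/-- Supported on level `j`. -/
def jLev {n : ℕ} (j : ℕ) (f : Finset (Fin n) → ℝ) : Prop := ∀ S, S.card ≠ j → f S = 0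

variable {n : ℕ}

lemma jU_apply (f : Finset (Fin n) → ℝ) (S) : jU n f S = ∑ x ∈ S, f (S.erase x) := rfl
lemma jD_apply (f : Finset (Fin n) → ℝ) (S) : jD n f S = ∑ x ∈ Sᶜ, f (insert x S) := rfl

lemma jip_add_left (f g h : Finset (Fin n) → ℝ) : jip (f + g) h = jip f h + jip g h := by
  simp [jip, add_mul, sum_add_distrib]
lemma jip_add_right (f g h : Finset (Fin n) → ℝ) : jip h (f + g) = jip h f + jip h g := by
  simp [jip, mul_add, sum_add_distrib]
lemma jip_smul_right (c : ℝ) (f h : Finset (Fin n) → ℝ) : jip h (c • f) = c * jip h f := by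
  simp only [jip, mul_sum, Pi.smul_apply, smul_eq_mul]
  exact sum_congr rfl fun _ _ => by ring
lemma jip_comm (f g : Finset (Fin n) → ℝ) : jip f g = jip g f := by
  simp [jip, mul_comm]
lemma jip_self_nonneg (f : Finset (Fin n) → ℝ) : 0 ≤ jip f f :=
  sum_nonneg fun _ _ => mul_self_nonneg _
lemma jip_cs (f g : Finset (Fin n) → ℝ) : jip f g ^ 2 ≤ jip f f * jip g g := by
  have := sum_mul_sq_le_sq_mul_sq univ f g
  simpa [jip, sq] using this

lemma jip_adj (f g : Finset (Fin n) → ℝ) : jip (jU n f) g = jip f (jD n g) := by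
  simp only [jip, jU_apply, jD_apply, sum_mul, mul_sum]
  rw [sum_sigma', sum_sigma']
  refine sum_nbij' (fun p => ⟨p.1.erase p.2, p.2⟩) (fun p => ⟨insert p.2 p.1, p.2⟩) ?_ ?_ ?_ ?_ ?_
  · rintro ⟨S, x⟩ h; simp
  · rintro ⟨S, x⟩ h; simp
  · rintro ⟨S, x⟩ h; simp at h; simp [insert_erase h]
  · rintro ⟨S, x⟩ h; simp at h; simp [erase_insert h]
  · rintro ⟨S, x⟩ h; simp at h; simp [insert_erase h]

lemma jcomm_apply (f : Finset (Fin n) → ℝ) (S) :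
    jD n (jU n f) S = jU n (jD n f) S + ((n : ℝ) - 2 * S.card) * f S := by
  simp only [jU_apply, jD_apply]
  have h1 : ∀ x ∈ Sᶜ, ∑ y ∈ insert x S, f ((insert x S).erase y)
      = f S + ∑ y ∈ S, f ((insert x S).erase y) := by
    intro x hx
    have hx : x ∉ S := by simpa using hx
    rw [sum_insert hx, erase_insert hx]
  have h2 : ∀ y ∈ S, ∑ x ∈ (S.erase y)ᶜ, f (insert x (S.erase y))
      = f S + ∑ x ∈ Sᶜ, f ((insert x S).erase y) := by
    intro y hy
    have : (S.erase y)ᶜ = insert y Sᶜ := by ext z; simp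
    rw [this, sum_insert (by simpa using hy), insert_erase hy]
    congr 1
    refine sum_congr rfl fun x hx => ?_
    rw [erase_insert_of_ne]
    rintro rfl
    simp [hy] at hx
  rw [sum_congr rfl h1, sum_congr rfl h2, sum_add_distrib, sum_add_distrib, sum_comm]
  simp only [sum_const, nsmul_eq_mul]
  have : ((Sᶜ.card : ℕ) : ℝ) = n - S.card := by
    have := card_add_card_compl S
    rw [Fintype.card_fin] at this
    rw [eq_sub_iff_add_eq']; exact_mod_cast this
  rw [this]; ring

lemma jcomm {j : ℕ} {f : Finset (Fin n) → ℝ} (hf : jLev j f) :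
    jD n (jU n f) = jU n (jD n f) + ((n : ℝ) - 2 * j) • f := by
  ext S
  rw [jcomm_apply]
  by_cases h : S.card = j
  · simp [h]
  · simp [hf S h]

lemma jLev.up {j : ℕ} {f : Finset (Fin n) → ℝ} (hf : jLev j f) : jLev (j + 1) (jU n f) := by
  intro S hS
  refine sum_eq_zero fun x hx => hf _ ?_
  rw [card_erase_of_mem hx]
  have := card_pos.2 ⟨x, hx⟩
  omega

lemma jLev.down {j : ℕ} {f : Finset (Fin n) → ℝ} (hf : jLev (j + 1) f) : jLev j (jD n f) := by
  intro S hS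
  refine sum_eq_zero fun x hx => hf _ ?_
  rw [card_insert_of_notMem (by simpa using hx)]
  omega

lemma jLev.ups {j : ℕ} {f : Finset (Fin n) → ℝ} (hf : jLev j f) (a : ℕ) :
    jLev (j + a) ((jU n)^[a] f) := by
  induction a with
  | zero => simpa
  | succ a ih => rw [Function.iterate_succ_apply']; exact ih.up

lemma jLev.downs {j : ℕ} (a : ℕ) {f : Finset (Fin n) → ℝ} (hf : jLev (j + a) f) :
    jLev j ((jD n)^[a] f) := by
  induction a generalizing f with
  | zero => simpa
  | succ a ih => rw [Function.iterate_succ_apply]; exact ih (jLev.down (by rwa [add_assoc]))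

lemma jip_adjs (a : ℕ) (f g : Finset (Fin n) → ℝ) :
    jip ((jU n)^[a] f) g = jip f ((jD n)^[a] g) := by
  induction a generalizing g with
  | zero => rfl
  | succ a ih => rw [Function.iterate_succ_apply', jip_adj, ih, Function.iterate_succ_apply]

lemma jLev.add {j : ℕ} {f g : Finset (Fin n) → ℝ} (hf : jLev j f) (hg : jLev j g) :
    jLev j (f + g) := fun S hS => by simp [hf S hS, hg S hS]
lemma jLev.smul {j : ℕ} (c : ℝ) {f : Finset (Fin n) → ℝ} (hf : jLev j f) :
    jLev j (c • f) := fun S hS => by simp [hf S hS]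

lemma jU_norm {j : ℕ} {f : Finset (Fin n) → ℝ} (hf : jLev j f) :
    jip (jU n f) (jU n f) = jip (jD n f) (jD n f) + ((n : ℝ) - 2 * j) * jip f f := by
  rw [jip_adj, jcomm hf, jip_add_right, jip_smul_right, jip_comm f, jip_adj]

/-- Part A, one step. -/
lemma jA_step (t j : ℕ) (hn : 2 * t + j ≤ n + 1) {h : Finset (Fin n) → ℝ}
    (hl : jLev (t + j) h) (h0 : (jD n)^[j + 1] h = 0) :
    jip (jD n h) (jD n h) ≤ (j : ℝ) * ((n : ℝ) + 1 - 2 * t - j) * jip h h := by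
  induction j generalizing h with
  | zero => simp at h0; simp [h0, jip]
  | succ j ih =>
    have hn' : (2 * t + (j + 1) : ℝ) ≤ n + 1 := by exact_mod_cast hn
    set g := jD n h with hg
    have hgl : jLev (t + j) g := hl.down
    have i1 := ih (by omega) hgl (by rwa [Function.iterate_succ_apply] at h0)
    have i2 := jU_norm hgl
    have i3 : jip g g = jip (jU n g) h := by rw [jip_adj]
    have i4 := jip_cs (jU n g) h
    rw [← i3] at i4
    have pg := jip_self_nonneg g
    have ph := jip_self_nonneg h
    push_cast at i2 ⊢
    have hc : jip (jU n g) (jU n g) ≤ ((j + 1 : ℝ) * ((n : ℝ) + 1 - 2 * t - (j + 1))) * jip g g := by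
      rw [i2]; linarith
    set c := ((j + 1 : ℝ) * ((n : ℝ) + 1 - 2 * t - (j + 1))) with hcdef
    have c0 : 0 ≤ c := mul_nonneg (by positivity) (by linarith)
    rcases pg.eq_or_lt with h1 | h1
    · rw [← h1]; positivity
    · have : jip g g * jip g g ≤ (c * jip h h) * jip g g := by nlinarith
      exact le_of_mul_le_mul_right this h1

lemma jA_iter (t p j : ℕ) (hj : j ≤ p) (hn : 2 * t + p ≤ n + 1) {h : Finset (Fin n) → ℝ}
    (hl : jLev (t + p) h) (h0 : (jD n)^[p + 1] h = 0) :
    jip ((jD n)^[j] h) ((jD n)^[j] h) ≤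
      (p.descFactorial j : ℝ) * ((n + 1 - 2 * t - p).ascFactorial j : ℝ) * jip h h := by
  induction j with
  | zero => simp
  | succ j ih =>
    have ih := ih (by omega)
    obtain ⟨q, rfl⟩ := Nat.exists_eq_add_of_le (show j ≤ p by omega)
    have hl' : jLev (t + q) ((jD n)^[j] h) := jLev.downs j (by
      rwa [show t + q + j = t + (j + q) by omega])
    have := jA_step t q (by omega) hl' (by
      rw [← Function.iterate_add_apply, show q + 1 + j = j + q + 1 by omega, h0])
    rw [← Function.iterate_succ_apply' (jD n)] at this
    refine this.trans ?_
    rw [Nat.descFactorial_succ, Nat.ascFactorial_succ]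
    have e : ((n + 1 - 2 * t - (j + q) + j : ℕ) : ℝ) = (n : ℝ) + 1 - 2 * t - q := by
      rw [show n + 1 - 2 * t - (j + q) + j = n + 1 - (2 * t + q) by omega,
        Nat.cast_sub (by omega)]
      push_cast; ring
    rw [Nat.cast_mul, Nat.cast_mul, e, show j + q - j = q by omega]
    have c0 : (0:ℝ) ≤ (q : ℝ) * ((n : ℝ) + 1 - 2 * t - q) := by
      rw [← e]; positivity
    calc _ ≤ _ := mul_le_mul_of_nonneg_left ih c0
      _ = _ := by ring

/-- Part B, one step. -/
lemma jB_step (r j : ℕ) (hn : 2 * r + j ≤ n) {g : Finset (Fin n) → ℝ} (hg : jLev r g) :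
    ((j : ℝ) + 1) * ((n : ℝ) - 2 * r - j) * jip ((jU n)^[j] g) ((jU n)^[j] g) ≤
      jip ((jU n)^[j + 1] g) ((jU n)^[j + 1] g) := by
  induction j with
  | zero =>
    have := jU_norm hg
    have p := jip_self_nonneg (jD n g)
    simp only [Function.iterate_zero, id, zero_add, Function.iterate_one]
    rw [this]; push_cast; linarith
  | succ j ih =>
    have ih := ih (by omega)
    have hn' : (2 * r + (j + 1) : ℝ) ≤ n := by exact_mod_cast hn
    rw [Function.iterate_succ_apply' _ (j + 1)]
    set v := (jU n)^[j] g with hv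
    have hu : (jU n)^[j + 1] g = jU n v := Function.iterate_succ_apply' _ _ _
    rw [hu] at ih ⊢
    set u := jU n v with hu'
    have i2 := jU_norm (show jLev (r + j + 1) u from (hg.ups j).up)
    have i3 : jip u u = jip v (jD n u) := by rw [← jip_adj]
    have i4 := jip_cs v (jD n u)
    rw [← i3] at i4
    have pu := jip_self_nonneg u
    have pv := jip_self_nonneg v
    have pd := jip_self_nonneg (jD n u)
    set d := ((j : ℝ) + 1) * ((n : ℝ) - 2 * r - j) with hd
    have d0 : 0 < d := mul_pos (by positivity) (by linarith)
    have key : d * jip u u ≤ jip (jD n u) (jD n u) := by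
      rcases pu.eq_or_lt with h1 | h1
      · rw [← h1]; simpa using pd
      · have : (d * jip u u) * jip u u ≤ jip (jD n u) (jD n u) * jip u u := by
          nlinarith [mul_le_mul_of_nonneg_right ih pd]
        exact le_of_mul_le_mul_right this h1
    rw [i2]; push_cast
    linarith

lemma jB_iter (r a : ℕ) (hn : 2 * r + a ≤ n) {g : Finset (Fin n) → ℝ} (hg : jLev r g) :
    (a.factorial : ℝ) * ((n - 2 * r).descFactorial a : ℝ) * jip g g ≤
      jip ((jU n)^[a] g) ((jU n)^[a] g) := by
  induction a with
  | zero => simp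
  | succ a ih =>
    have ih := ih (by omega)
    refine le_trans ?_ (jB_step r a (by omega) hg)
    rw [Nat.descFactorial_succ, Nat.factorial_succ]
    have e : ((n - 2 * r - a : ℕ) : ℝ) = (n : ℝ) - 2 * r - a := by
      rw [show n - 2 * r - a = n - (2 * r + a) by omega, Nat.cast_sub (by omega)]
      push_cast; ring
    rw [Nat.cast_mul, Nat.cast_mul, e]
    push_cast
    have c0 : (0:ℝ) ≤ ((a : ℝ) + 1) * ((n : ℝ) - 2 * r - a) := by
      rw [← e]; positivity
    calc _ = _ := by ring
      _ ≤ _ := mul_le_mul_of_nonneg_left ih c0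

lemma jB (r a : ℕ) (hn : 2 * r + a ≤ n) {g : Finset (Fin n) → ℝ} (hg : jLev r g) :
    (a.factorial : ℝ) * ((n - 2 * r).descFactorial a : ℝ) *
        jip ((jU n)^[a] g) ((jU n)^[a] g) ≤
      jip ((jD n)^[a] ((jU n)^[a] g)) ((jD n)^[a] ((jU n)^[a] g)) := by
  have ih := jB_iter r a hn hg
  set u := (jU n)^[a] g with hu
  have i3 : jip u u = jip g ((jD n)^[a] u) := by rw [← jip_adjs]
  have i4 := jip_cs g ((jD n)^[a] u)
  rw [← i3] at i4
  have pu := jip_self_nonneg u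
  have pg := jip_self_nonneg g
  have pd := jip_self_nonneg ((jD n)^[a] u)
  set d := (a.factorial : ℝ) * ((n - 2 * r).descFactorial a : ℝ) with hd
  have d0 : 0 ≤ d := by positivity
  rcases pu.eq_or_lt with h1 | h1
  · rw [← h1]; simpa using pd
  · have : (d * jip u u) * jip u u ≤ jip ((jD n)^[a] u) ((jD n)^[a] u) * jip u u := by
      nlinarith [mul_le_mul_of_nonneg_right ih pd, mul_le_mul_of_nonneg_left i4 d0]
    exact le_of_mul_le_mul_right this h1

/-- Invariance of the image. -/
lemma jC_step (r a : ℕ) {g : Finset (Fin n) → ℝ} (hg : jLev r g) :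
    ∃ g', jLev r g' ∧ jD n ((jU n)^[a + 1] g) = (jU n)^[a] g' := by
  induction a with
  | zero =>
    exact ⟨_, hg.up.down, rfl⟩
  | succ a ih =>
    obtain ⟨g', h1, h2⟩ := ih
    refine ⟨g' + ((n : ℝ) - 2 * ((r + (a + 1) : ℕ) : ℝ)) • g, h1.add (hg.smul _), ?_⟩
    rw [Function.iterate_succ_apply' _ (a + 1), jcomm (hg.ups (a + 1)), h2,
      ← Function.iterate_succ_apply' (jU n) a g']
    simp only [← Module.End.pow_apply, map_add, map_smul]

lemma jC (r a k : ℕ) {g : Finset (Fin n) → ℝ} (hg : jLev r g) :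
    ∃ g', jLev r g' ∧ (jD n)^[k] ((jU n)^[a + k] g) = (jU n)^[a] g' := by
  induction k generalizing g with
  | zero => exact ⟨g, hg, rfl⟩
  | succ k ih =>
    obtain ⟨g', h1, h2⟩ := jC_step r (a + k) hg
    obtain ⟨g'', h3, h4⟩ := ih h1
    exact ⟨g'', h3, by rw [Function.iterate_succ_apply, ← add_assoc, h2, h4]⟩

lemma jcross (r a k : ℕ) {g H : Finset (Fin n) → ℝ} (hg : jLev r g)
    (hH : (jD n)^[a + k] H = 0) :
    jip ((jD n)^[k] ((jU n)^[a + k] g)) ((jD n)^[k] H) = 0 := by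
  obtain ⟨g', h1, h2⟩ := jC r a k hg
  rw [h2, jip_adjs, ← Function.iterate_add_apply, hH]
  simp [jip]

lemma jdecomp (W : Submodule ℝ (Finset (Fin n) → ℝ)) (F : Finset (Fin n) → ℝ) :
    ∃ G H, G ∈ W ∧ (∀ w ∈ W, jip w H = 0) ∧ F = G + H := by
  let e := (WithLp.linearEquiv 2 ℝ (Finset (Fin n) → ℝ)).symm
  obtain ⟨y, hy, z, hz, hyz⟩ := (W.map (e : (Finset (Fin n) → ℝ) →ₗ[ℝ] _)).exists_add_mem_mem_orthogonal (e F)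
  obtain ⟨G, hG, rfl⟩ := hy
  refine ⟨G, e.symm z, hG, ?_, ?_⟩
  · intro w hw
    have := hz (e w) ⟨w, hw, rfl⟩
    simp only [PiLp.inner_apply] at this
    rw [← this]
    refine sum_congr rfl fun S _ => ?_
    simp [e, mul_comm]
  · apply e.injective
    simp [hyz]

lemma jdecomp' (r a : ℕ) {F : Finset (Fin n) → ℝ} (hF : jLev (r + a) F) :
    ∃ g H, jLev r g ∧ jLev (r + a) H ∧ (jD n)^[a] H = 0 ∧ F = (jU n)^[a] g + H := by
  let L : Submodule ℝ (Finset (Fin n) → ℝ) :=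
    { carrier := {f | jLev r f}
      add_mem' := fun h1 h2 => jLev.add h1 h2
      zero_mem' := fun S _ => rfl
      smul_mem' := fun c f h => jLev.smul c h }
  obtain ⟨G, H, ⟨g, hg, rfl⟩, hH, rfl⟩ := jdecomp (L.map ((jU n) ^ a)) F
  rw [Module.End.pow_apply] at hF
  have hHl : jLev (r + a) H := by
    have := hF.add ((hg.ups a).smul (-1))
    simpa using this
  refine ⟨g, H, hg, hHl, ?_, by rw [Module.End.pow_apply]⟩
  have hl := hHl.downs a
  have := hH _ ⟨_, hl, rfl⟩
  rw [Module.End.pow_apply, jip_adjs] at this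
  unfold jip at this
  rw [sum_eq_zero_iff_of_nonneg (fun _ _ => mul_self_nonneg _)] at this
  ext S
  simpa using this S (mem_univ _)

lemma jD_iter_apply (a : ℕ) (F : Finset (Fin n) → ℝ) (Y : Finset (Fin n)) :
    (jD n)^[a] F Y = (a.factorial : ℝ) *
      ∑ S ∈ univ.filter (fun S : Finset (Fin n) => S.card = Y.card + a ∧ Y ⊆ S), F S := by
  induction a generalizing Y with
  | zero =>
    have : univ.filter (fun S : Finset (Fin n) => S.card = Y.card + 0 ∧ Y ⊆ S) = {Y} := by
      ext S
      simp only [mem_filter, mem_univ, true_and, mem_singleton]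
      constructor
      · rintro ⟨h1, h2⟩; exact (eq_of_subset_of_card_le h2 (by omega)).symm
      · rintro rfl; simp
    rw [this]; simp
  | succ a ih =>
    rw [Function.iterate_succ_apply', jD_apply]
    simp_rw [ih]
    rw [← mul_sum, Nat.factorial_succ, Nat.cast_mul, mul_comm ((a + 1 : ℕ) : ℝ), mul_assoc]
    congr 1
    simp only [sum_filter]
    rw [sum_comm, mul_sum]
    refine sum_congr rfl fun S _ => ?_
    by_cases h : S.card = Y.card + (a + 1) ∧ Y ⊆ S
    · rw [if_pos h, ← sum_filter, sum_const, nsmul_eq_mul]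
      congr 2
      have : ({x ∈ Yᶜ | S.card = (insert x Y).card + a ∧ insert x Y ⊆ S}) = S \ Y := by
        ext x
        simp only [mem_filter, mem_compl, mem_sdiff]
        constructor
        · rintro ⟨h1, h2, h3⟩; exact ⟨h3 (mem_insert_self _ _), h1⟩
        · rintro ⟨h1, h2⟩
          refine ⟨h2, ?_, insert_subset h1 h.2⟩
          rw [card_insert_of_notMem h2, h.1]; ring
      rw [this, card_sdiff_of_subset h.2]; omega
    · rw [if_neg h, mul_zero]
      refine sum_eq_zero fun x hx => if_neg ?_
      rintro ⟨h1, h2⟩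
      refine h ⟨?_, (subset_insert _ _).trans h2⟩
      rw [card_insert_of_notMem (by simpa using hx)] at h1; omega

lemma jA (t m k : ℕ) (ht : t ≤ m) (hn : 2 * (m + k) ≤ n) {h : Finset (Fin n) → ℝ}
    (hl : jLev (m + k) h) (h0 : (jD n)^[m + k - t + 1] h = 0) :
    jip ((jD n)^[k] h) ((jD n)^[k] h) ≤
      (k.factorial : ℝ) ^ 2 * ((m + k - t).choose k : ℝ) * ((n - m).choose k : ℝ) * jip h h := by
  have := jA_iter t (m + k - t) k (by omega) (by omega)
    (by rwa [show t + (m + k - t) = m + k by omega]) h0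
  refine this.trans (mul_le_mul_of_nonneg_right ?_ (jip_self_nonneg h))
  rw [show n + 1 - 2 * t - (m + k - t) = (n - t - m - k) + 1 by omega,
    Nat.descFactorial_eq_factorial_mul_choose, Nat.ascFactorial_eq_factorial_mul_choose,
    show n - t - m - k + k = n - t - m by omega]
  have h1 : (n - t - m).choose k ≤ (n - m).choose k := Nat.choose_le_choose k (by omega)
  have h1 : ((n - t - m).choose k : ℝ) ≤ ((n - m).choose k : ℝ) := by exact_mod_cast h1
  push_cast
  calc _ = ((k.factorial : ℝ) ^ 2 * ((m + k - t).choose k : ℝ)) * ((n - t - m).choose k : ℝ) := by ring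
    _ ≤ _ := mul_le_mul_of_nonneg_left h1 (by positivity)

lemma jD_kill (ℓ : ℕ) {h : Finset (Fin n) → ℝ} (hl : jLev ℓ h) : (jD n)^[ℓ + 1] h = 0 := by
  rw [Function.iterate_succ_apply']
  have : jLev 0 ((jD n)^[ℓ] h) := jLev.downs ℓ (by simpa)
  ext S
  refine sum_eq_zero fun x hx => this _ ?_
  simp

lemma choose_double (a r M : ℕ) (h : 2 * a ≤ M + 1) :
    (M + r).choose a ≤ 2 ^ r * M.choose a := by
  induction r with
  | zero => simp
  | succ r ih =>
    have e := Nat.choose_mul_succ_eq (M + r) a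
    have : (M + r + 1).choose a ≤ 2 * (M + r).choose a := by
      have h2 : 0 < M + r + 1 - a ∨ (M + r + 1 - a = 0) := by omega
      rcases h2 with h2 | h2
      · refine le_of_mul_le_mul_right ?_ h2
        rw [← e]
        calc _ ≤ (M + r).choose a * (2 * (M + r + 1 - a)) := Nat.mul_le_mul_left _ (by omega)
          _ = _ := by ring
      · have : a = 0 := by omega
        subst this; simp
    calc _ ≤ 2 * (M + r).choose a := this
      _ ≤ 2 * (2 ^ r * M.choose a) := by omega
      _ = _ := by ring

lemma jspec (ℓ m k r : ℕ) (hm : ℓ = m + k) (hn : 2 * ℓ ≤ n) (hr : 2 * r ≤ ℓ) (hrm : r + 1 ≤ m)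
    (β : ℝ) (hβ1 : β ≤ 1)
    (hβ : ((ℓ - (r + 1)).choose k : ℝ) ≤ β * (ℓ.choose k : ℝ))
    {F : Finset (Fin n) → ℝ} (hF : jLev ℓ F) :
    (1 - β) * (jip F F / n.choose ℓ - 2 ^ r * (ℓ.choose r : ℝ) *
        (jip ((jD n)^[ℓ - r] F) ((jD n)^[ℓ - r] F) /
          (n.choose r * ((ℓ - r).factorial * (n - r).choose (ℓ - r)) ^ 2))) ≤
      jip F F / n.choose ℓ - jip ((jD n)^[k] F) ((jD n)^[k] F) /
        (n.choose m * (k.factorial * (n - m).choose k) ^ 2) := by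
  obtain ⟨a, rfl⟩ := Nat.exists_eq_add_of_le (show r ≤ ℓ by omega)
  obtain ⟨g, H, hg, hH, hH0, rfl⟩ := jdecomp' r a hF
  have hG := hg.ups a
  have hB := jB r a (by omega) hg
  have hortho : jip ((jU n)^[a] g) H = 0 := by rw [jip_adjs, hH0]; simp [jip]
  have hcr : jip ((jD n)^[k] ((jU n)^[a] g)) ((jD n)^[k] H) = 0 := by
    have := jcross r (a - k) k (H := H) hg (by rwa [show a - k + k = a by omega])
    rwa [show a - k + k = a by omega] at this
  set G := (jU n)^[a] g with hGdef
  have e1 : jip (G + H) (G + H) = jip G G + jip H H := by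
    rw [jip_add_left, jip_add_right, jip_add_right, jip_comm H G, hortho]; ring
  have e2 : jip ((jD n)^[k] (G + H)) ((jD n)^[k] (G + H)) =
      jip ((jD n)^[k] G) ((jD n)^[k] G) + jip ((jD n)^[k] H) ((jD n)^[k] H) := by
    have : (jD n)^[k] (G + H) = (jD n)^[k] G + (jD n)^[k] H := by
      simp only [← Module.End.pow_apply, map_add]
    rw [this, jip_add_left, jip_add_right, jip_add_right, jip_comm ((jD n)^[k] H), hcr]; ring
  have e3 : (jD n)^[a] (G + H) = (jD n)^[a] G := by
    have : (jD n)^[a] (G + H) = (jD n)^[a] G + (jD n)^[a] H := by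
      simp only [← Module.End.pow_apply, map_add]
    rw [this, hH0, add_zero]
  rw [Nat.add_sub_cancel_left, e1, e2, e3]
  have a1 := jA 0 m k (by omega) (by omega) (h := G) (by rwa [← hm]) (by
    rw [← hm]; exact jD_kill _ hG)
  have a2 := jA (r + 1) m k (by omega) (by omega) (h := H) (by rwa [← hm]) (by
    rw [← hm, show r + a - (r + 1) + 1 = a by omega, hH0])
  rw [← hm] at a1 a2
  rw [Nat.sub_zero] at a1
  -- binomial identities
  have b1 : (n.choose (r + a) : ℝ) * ((r + a).choose k : ℝ) = n.choose m * (n - m).choose k := by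
    have := Nat.choose_mul (n := n) (k := r + a) (s := m) (by omega)
    rw [show r + a - m = k by omega] at this
    rw [show (r + a).choose k = (r + a).choose m from
      (Nat.choose_symm_of_eq_add hm).symm]
    exact_mod_cast this
  have b2 : (n.choose (r + a) : ℝ) * ((r + a).choose r : ℝ) = n.choose r * (n - r).choose a := by
    have := Nat.choose_mul (n := n) (k := r + a) (s := r) (by omega)
    rw [show r + a - r = a by omega] at this
    exact_mod_cast this
  have b3 : ((n - r).choose a : ℝ) ≤ 2 ^ r * ((n - 2 * r).choose a : ℝ) := by
    have := choose_double a r (n - 2 * r) (by omega)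
    rw [show n - 2 * r + r = n - r by omega] at this
    exact_mod_cast this
  rw [Nat.descFactorial_eq_factorial_mul_choose] at hB
  push_cast at hB
  have p1 : (0:ℝ) < n.choose (r + a) := by exact_mod_cast Nat.choose_pos (by omega)
  have p2 : (0:ℝ) < (r + a).choose k := by exact_mod_cast Nat.choose_pos (by omega)
  have p3 : (0:ℝ) < (r + a).choose r := by exact_mod_cast Nat.choose_pos (by omega)
  have p4 : (0:ℝ) < n.choose m := by exact_mod_cast Nat.choose_pos (by omega)
  have p5 : (0:ℝ) < n.choose r := by exact_mod_cast Nat.choose_pos (by omega)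
  have p6 : (0:ℝ) < (n - m).choose k := by exact_mod_cast Nat.choose_pos (by omega)
  have p7 : (0:ℝ) < (n - r).choose a := by exact_mod_cast Nat.choose_pos (by omega)
  have p8 : (0:ℝ) < k.factorial := by exact_mod_cast Nat.factorial_pos _
  have p9 : (0:ℝ) < a.factorial := by exact_mod_cast Nat.factorial_pos _
  have pG := jip_self_nonneg G
  have pH := jip_self_nonneg H
  set x := jip G G
  set y := jip H H
  set Nn : ℝ := ((n.choose (r + a) : ℕ) : ℝ)
  set Ck : ℝ := (((r + a).choose k : ℕ) : ℝ)
  set Cr : ℝ := (((r + a).choose r : ℕ) : ℝ)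
  set kf : ℝ := ((k.factorial : ℕ) : ℝ)
  set af : ℝ := ((a.factorial : ℕ) : ℝ)
  set Mk : ℝ := (((n - m).choose k : ℕ) : ℝ)
  set Ra : ℝ := (((n - r).choose a : ℕ) : ℝ)
  have c1 : jip ((jD n)^[k] G) ((jD n)^[k] G) / (n.choose m * (kf * Mk) ^ 2) ≤ x / Nn := by
    rw [div_le_div_iff₀ (by positivity) p1]
    calc _ ≤ _ := mul_le_mul_of_nonneg_right a1 p1.le
      _ = kf ^ 2 * Mk * x * (Nn * Ck) := by ring
      _ = _ := by rw [b1]; ring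
  have c2 : jip ((jD n)^[k] H) ((jD n)^[k] H) / (n.choose m * (kf * Mk) ^ 2) ≤ β * (y / Nn) := by
    rw [← mul_div_assoc, div_le_div_iff₀ (by positivity) p1]
    calc _ ≤ _ := mul_le_mul_of_nonneg_right a2 p1.le
      _ = (kf ^ 2 * Mk * y * Nn) * ((r + a - (r + 1)).choose k : ℝ) := by ring
      _ ≤ (kf ^ 2 * Mk * y * Nn) * (β * Ck) := mul_le_mul_of_nonneg_left hβ (by positivity)
      _ = β * kf ^ 2 * Mk * y * (Nn * Ck) := by ring
      _ = _ := by rw [b1]; ring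
  have c3 : x / Nn ≤ 2 ^ r * Cr *
      (jip ((jD n)^[a] G) ((jD n)^[a] G) / (n.choose r * (af * Ra) ^ 2)) := by
    rw [← mul_div_assoc, div_le_div_iff₀ p1 (by positivity)]
    calc _ = (x * n.choose r * af ^ 2 * Ra) * Ra := by ring
      _ ≤ (x * n.choose r * af ^ 2 * Ra) * (2 ^ r * ((n - 2 * r).choose a : ℝ)) :=
        mul_le_mul_of_nonneg_left b3 (by positivity)
      _ = 2 ^ r * (n.choose r * Ra) * (af * (af * ((n - 2 * r).choose a : ℝ)) * x) := by ring
      _ ≤ 2 ^ r * (n.choose r * Ra) * jip ((jD n)^[a] G) ((jD n)^[a] G) :=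
        mul_le_mul_of_nonneg_left hB (by positivity)
      _ = _ := by rw [← b2]; ring
  set z := 2 ^ r * Cr *
      (jip ((jD n)^[a] G) ((jD n)^[a] G) / (n.choose r * (af * Ra) ^ 2))
  rw [add_div, add_div]
  nlinarith [mul_le_mul_of_nonneg_left c3 (sub_nonneg.2 hβ1)]


lemma jdeg (ℓ k : ℕ) (hk : k ≤ ℓ) (U : Finset (Fin n)) (hU : U.card = ℓ) :
    (univ.filter (fun V : Finset (Fin n) => V.card = ℓ ∧ (U ∩ V).card = ℓ - k)).card
      = ℓ.choose k * (n - ℓ).choose k := by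
  have : ℓ.choose k * (n - ℓ).choose k = (powersetCard k U ×ˢ powersetCard k Uᶜ).card := by
    rw [card_product, card_powersetCard, card_powersetCard, hU, card_compl, Fintype.card_fin, hU]
  rw [this]
  refine card_nbij' (fun V => (U \ V, V \ U)) (fun p => (U \ p.1) ∪ p.2) ?_ ?_ ?_ ?_
  · intro V hV
    simp only [coe_filter, mem_univ, true_and, Set.mem_ofPred_eq] at hV
    simp only [coe_product, Set.mem_prod, mem_coe, mem_powersetCard]
    have h1 := card_sdiff_add_card_inter U V
    have h2 := card_sdiff_add_card_inter V U
    rw [inter_comm V U] at h2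
    refine ⟨⟨sdiff_subset, by omega⟩, ?_, by omega⟩
    intro z; simp
  · rintro ⟨A, B⟩ h
    simp only [coe_product, Set.mem_prod, mem_coe, mem_powersetCard] at h
    obtain ⟨⟨hA, hA'⟩, hB, hB'⟩ := h
    have hBU : ∀ z ∈ B, z ∉ U := fun z hz => by simpa using hB hz
    simp only [coe_filter, mem_univ, true_and, Set.mem_ofPred_eq]
    have e : U ∩ (U \ A ∪ B) = U \ A := by
      ext z; have := hBU z; simp; tauto
    have c : (U \ A).card = ℓ - k := by rw [card_sdiff_of_subset hA, hA', hU]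
    rw [e, c, card_union_of_disjoint, c, hB']
    · omega
    · rw [disjoint_left]; intro z hz hz'
      exact hBU z hz' (sdiff_subset hz)
  · intro V _
    ext z; simp; tauto
  · rintro ⟨A, B⟩ h
    simp only [coe_product, Set.mem_prod, mem_coe, mem_powersetCard] at h
    obtain ⟨⟨hA, hA'⟩, hB, hB'⟩ := h
    have hBU : ∀ z ∈ B, z ∉ U := fun z hz => by simpa using hB hz
    ext z
    · have := hBU z; have := @hA z; simp; tauto
    · have := hBU z; have := @hA z; simp; tauto

lemma jedge_sum (ℓ k : ℕ) (hk : k ≤ ℓ) (f : Finset (Fin n) → ℝ) :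
    ∑ p ∈ ugJEdges n ℓ k, f p.1 =
      ((ℓ.choose k * (n - ℓ).choose k : ℕ) : ℝ) *
        ∑ S ∈ univ.filter (fun S : Finset (Fin n) => S.card = ℓ), f S := by
  unfold ugJEdges
  rw [sum_filter, ← univ_product_univ, sum_product, sum_filter, mul_sum]
  refine sum_congr rfl fun U _ => ?_
  by_cases hU : U.card = ℓ
  · rw [if_pos hU, ← jdeg ℓ k hk U hU, ← sum_filter]
    simp only [hU, true_and]
    rw [sum_const, nsmul_eq_mul]
  · simp [hU]

lemma jedge_sum' (ℓ k : ℕ) (hk : k ≤ ℓ) (f : Finset (Fin n) → ℝ) :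
    ∑ p ∈ ugJEdges n ℓ k, f p.2 =
      ((ℓ.choose k * (n - ℓ).choose k : ℕ) : ℝ) *
        ∑ S ∈ univ.filter (fun S : Finset (Fin n) => S.card = ℓ), f S := by
  rw [← jedge_sum ℓ k hk f]
  refine sum_nbij' Prod.swap Prod.swap ?_ ?_ ?_ ?_ ?_
  · rintro ⟨U, V⟩ h; simp only [ugJEdges, mem_filter, mem_univ, true_and, Prod.swap] at h ⊢
    rw [inter_comm]; tauto
  · rintro ⟨U, V⟩ h; simp only [ugJEdges, mem_filter, mem_univ, true_and, Prod.swap] at h ⊢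
    rw [inter_comm]; tauto
  · simp
  · simp
  · simp

lemma jedge_card (ℓ k : ℕ) (hk : k ≤ ℓ) :
    ((ugJEdges n ℓ k).card : ℝ) =
      ((ℓ.choose k * (n - ℓ).choose k : ℕ) : ℝ) * n.choose ℓ := by
  have := jedge_sum (n := n) ℓ k hk (fun _ => 1)
  simp only [sum_const, nsmul_eq_mul, mul_one] at this
  rw [this]
  congr 2
  have e : univ.filter (fun S : Finset (Fin n) => S.card = ℓ) = powersetCard ℓ univ := by
    ext S; simp [mem_powersetCard]
  rw [e, card_powersetCard, card_univ, Fintype.card_fin]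

/-- Sum over edges is dominated by the down-up form. -/
lemma jedge_le (m k : ℕ) (F : Finset (Fin n) → ℝ)
    (hF : ∀ S : Finset (Fin n), S.card = m + k → 0 ≤ F S) :
    ∑ p ∈ ugJEdges n (m + k) k, F p.1 * F p.2 ≤
      ∑ Y ∈ univ.filter (fun Y : Finset (Fin n) => Y.card = m),
        (∑ S ∈ univ.filter (fun S : Finset (Fin n) => S.card = m + k ∧ Y ⊆ S), F S) ^ 2 := by
  have h1 : ∑ p ∈ ugJEdges n (m + k) k, F p.1 * F p.2 =
      ∑ Y ∈ univ.filter (fun Y : Finset (Fin n) => Y.card = m),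
        ∑ p ∈ (ugJEdges n (m + k) k).filter (fun p => p.1 ∩ p.2 = Y), F p.1 * F p.2 := by
    rw [sum_fiberwise_of_maps_to]
    rintro ⟨U, V⟩ h
    simp only [ugJEdges, mem_filter, mem_univ, true_and] at h ⊢
    omega
  rw [h1]
  refine sum_le_sum fun Y _ => ?_
  rw [sq, sum_mul_sum, ← sum_product']
  refine sum_le_sum_of_subset_of_nonneg ?_ ?_
  · rintro ⟨U, V⟩ h
    simp only [ugJEdges, mem_filter, mem_univ, true_and, mem_product] at h ⊢
    obtain ⟨⟨h1, h2, h3⟩, rfl⟩ := h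
    exact ⟨⟨h1, inter_subset_left⟩, h2, inter_subset_right⟩
  · rintro ⟨U, V⟩ h _
    simp only [mem_filter, mem_univ, true_and, mem_product] at h
    exact mul_nonneg (hF _ h.1.1) (hF _ h.2.1)

/-- Restriction to a level. -/
def jres (ℓ : ℕ) (F : Finset (Fin n) → ℝ) : Finset (Fin n) → ℝ :=
  fun S => if S.card = ℓ then F S else 0

lemma jres_lev (ℓ : ℕ) (F : Finset (Fin n) → ℝ) : jLev ℓ (jres ℓ F) := fun S hS => by
  simp [jres, hS]

lemma jres_norm (ℓ : ℕ) (F : Finset (Fin n) → ℝ) :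
    jip (jres ℓ F) (jres ℓ F) =
      ∑ S ∈ univ.filter (fun S : Finset (Fin n) => S.card = ℓ), F S ^ 2 := by
  rw [sum_filter]
  refine sum_congr rfl fun S _ => ?_
  unfold jres; split_ifs <;> ring

lemma jres_D (m a : ℕ) (F : Finset (Fin n) → ℝ) :
    jip ((jD n)^[a] (jres (m + a) F)) ((jD n)^[a] (jres (m + a) F)) =
      (a.factorial : ℝ) ^ 2 * ∑ Y ∈ univ.filter (fun Y : Finset (Fin n) => Y.card = m),
        (∑ S ∈ univ.filter (fun S : Finset (Fin n) => S.card = m + a ∧ Y ⊆ S), F S) ^ 2 := by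
  have hl : jLev m ((jD n)^[a] (jres (m + a) F)) := (jres_lev _ F).downs a
  rw [mul_sum, sum_filter]
  refine sum_congr rfl fun Y _ => ?_
  by_cases h : Y.card = m
  · rw [if_pos h, jD_iter_apply, h]
    have : ∑ S ∈ univ.filter (fun S : Finset (Fin n) => S.card = m + a ∧ Y ⊆ S), jres (m + a) F S
        = ∑ S ∈ univ.filter (fun S : Finset (Fin n) => S.card = m + a ∧ Y ⊆ S), F S := by
      refine sum_congr rfl fun S hS => ?_
      simp only [mem_filter, mem_univ, true_and] at hS
      simp [jres, hS.1]
    rw [this]; ring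
  · rw [if_neg h, hl _ h]; ring

lemma choose_gap (N k j : ℕ) : (N + j).choose (k + 1) ≤ N.choose (k + 1) + j * (N + j - 1).choose k := by
  induction j with
  | zero => simp
  | succ j ih =>
    rw [← add_assoc, Nat.choose_succ_succ, Nat.add_sub_cancel]
    have : (N + j - 1).choose k ≤ (N + j).choose k := Nat.choose_le_choose k (by omega)
    nlinarith

lemma choose_gap' (M k : ℕ) (hk : 1 ≤ k) (hM : k ≤ M) :
    ((M : ℝ) - k ^ 2) * M.choose k ≤ M * (M - k).choose k := by
  obtain ⟨k, rfl⟩ := Nat.exists_eq_add_of_le' hk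
  obtain ⟨N, rfl⟩ := Nat.exists_eq_add_of_le' hM
  have h1 := choose_gap N k (k + 1)
  have h2 := Nat.add_one_mul_choose_eq (N + k) k
  rw [show N + (k + 1) - 1 = N + k by omega] at h1
  rw [Nat.add_sub_cancel]
  have h1 : ((N + (k + 1)).choose (k + 1) : ℝ) ≤ N.choose (k + 1) + (k + 1) * (N + k).choose k := by
    exact_mod_cast h1
  have h2 : ((N : ℝ) + k + 1) * (N + k).choose k = (N + (k + 1)).choose (k + 1) * (k + 1) := by
    exact_mod_cast h2
  push_cast
  have := mul_le_mul_of_nonneg_left h1 (show (0:ℝ) ≤ N + (k + 1) by positivity)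
  nlinarith

lemma choose_beta (ℓ k t : ℕ) (ht : t + k ≤ ℓ) (α : ℝ) (hα : α ≤ 1) (hk : (k : ℝ) = α * ℓ) :
    ((ℓ - t).choose k : ℝ) ≤ (1 - α) ^ t * ℓ.choose k := by
  induction t with
  | zero => simp
  | succ t ih =>
    have ih := ih (by omega)
    obtain ⟨M, hM⟩ : ∃ M, ℓ - t = M + 1 := ⟨ℓ - t - 1, by omega⟩
    have e := Nat.choose_mul_succ_eq M k
    rw [show ℓ - (t + 1) = M by omega]
    rw [hM] at ih
    have e : (M.choose k : ℝ) * (M + 1) = (M + 1).choose k * ((M : ℝ) + 1 - k) := by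
      have h : ((M + 1 - k : ℕ) : ℝ) = (M : ℝ) + 1 - k := by
        rw [Nat.cast_sub (by omega)]; push_cast; ring
      rw [← h]; exact_mod_cast e
    have hMl : (M : ℝ) + 1 ≤ ℓ := by exact_mod_cast (show M + 1 ≤ ℓ by omega)
    have hα0 : 0 ≤ α := by
      by_contra hc
      have : (0:ℝ) ≤ k := by positivity
      have : (0:ℝ) < ℓ := by have : (0:ℝ) ≤ M := by positivity
                             linarith
      nlinarith
    have h1 : (M.choose k : ℝ) ≤ (1 - α) * (M + 1).choose k := by
      have hp : (0:ℝ) < M + 1 := by positivity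
      refine le_of_mul_le_mul_right ?_ hp
      rw [e]
      have : (M : ℝ) + 1 - k ≤ (1 - α) * (M + 1) := by nlinarith
      calc _ ≤ ((M + 1).choose k : ℝ) * ((1 - α) * (M + 1)) :=
            mul_le_mul_of_nonneg_left this (by positivity)
        _ = _ := by ring
    calc _ ≤ _ := h1
      _ ≤ (1 - α) * ((1 - α) ^ t * ℓ.choose k) := mul_le_mul_of_nonneg_left ih (by linarith)
      _ = _ := by ring

end JohnsonAux

set_option maxHeartbeats 4000000

/-- structure theorem for the Johnson graph: every `F : V(J) → [0,1]`
not correlated with any `r`-restricted subcube has high expansion. -/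
theorem stmt14 (n ℓ k : ℕ) (hℓ : 1 ≤ ℓ) (hn : 2 * ℓ ≤ n) (hk1 : 1 ≤ k)
    (α : ℝ) (hα0 : 0 < α) (hα2 : α < 1 / 2) (hk : (k : ℝ) = α * ℓ)
    (r : ℕ) (hr : 2 * r ≤ ℓ)
    (F : Finset (Fin n) → ℝ)
    (hF : ∀ S : Finset (Fin n), S.card = ℓ → 0 ≤ F S ∧ F S ≤ 1) :
    ugJLap n ℓ k F ≥
      (1 - (1 - α) ^ (r + 1)) *
          ((1 - (ℓ : ℝ) ^ 2 / n) * ugJAvg n ℓ F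
            - 8 ^ r * (Nat.choose ℓ r : ℝ) *
                (∑ j ∈ Finset.range (r + 1),
                  (∑ Y ∈ univ.filter (fun Y : Finset (Fin n) => Y.card = j),
                      (ugJDelta n ℓ F Y) ^ 2) / (Nat.choose n j : ℝ))
            + ugJAvg n ℓ (fun S => F S ^ 2) - ugJAvg n ℓ F)
        - ((2 * (ℓ : ℝ) ^ 2 + ℓ) / (2 * n)) * ugJAvg n ℓ F := by
  have hkl : 2 * k < ℓ := by
    have h0 : (0:ℝ) < ℓ := by exact_mod_cast hℓ
    have : (2 * k : ℝ) < ℓ := by rw [hk]; nlinarith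
    exact_mod_cast this
  obtain ⟨m, rfl⟩ := Nat.exists_eq_add_of_le' (show k ≤ ℓ by omega)
  set ℓ := m + k with hℓdef
  have hspec := jspec (n := n) ℓ m k r hℓdef hn hr (by omega) ((1 - α) ^ (r + 1))
    (pow_le_one₀ (by linarith) (by linarith))
    (choose_beta ℓ k (r + 1) (by omega) α (by linarith) hk) (jres_lev ℓ F)
  have hβ1 : (1 - α) ^ (r + 1) ≤ 1 := pow_le_one₀ (by linarith) (by linarith)
  have hβ0 : 0 ≤ (1 - α) ^ (r + 1) := pow_nonneg (by linarith) _
  set β := (1 - α) ^ (r + 1)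
  have hnorm := jres_norm ℓ F
  have hDk := jres_D m k F
  have hDr := jres_D r (ℓ - r) F
  rw [show r + (ℓ - r) = ℓ by omega] at hDr
  rw [← hℓdef] at hDk
  rw [hDk, hDr, hnorm] at hspec
  have hedge := jedge_le m k F (fun S hS => (hF S hS).1)
  rw [← hℓdef] at hedge
  have hs1 := jedge_sum (n := n) ℓ k (by omega) (fun S => F S ^ 2)
  have hs2 := jedge_sum' (n := n) ℓ k (by omega) (fun S => F S ^ 2)
  have hcard := jedge_card (n := n) ℓ k (by omega)
  -- expectation facts
  have p1 : (0:ℝ) < n.choose ℓ := by exact_mod_cast Nat.choose_pos (by omega)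
  have hE : ugJAvg n ℓ (fun S => F S ^ 2) ≤ ugJAvg n ℓ F := by
    unfold ugJAvg
    refine div_le_div_of_nonneg_right (sum_le_sum fun S hS => ?_) p1.le
    have := hF S (by simpa using hS)
    nlinarith
  have hE0 : 0 ≤ ugJAvg n ℓ (fun S => F S ^ 2) := by unfold ugJAvg; positivity
  -- the sum of restricted densities
  have hterm : ∀ j, j ≤ ℓ → (∑ Y ∈ univ.filter (fun Y : Finset (Fin n) => Y.card = j),
      (ugJDelta n ℓ F Y) ^ 2) / (Nat.choose n j : ℝ) =
      (∑ Y ∈ univ.filter (fun Y : Finset (Fin n) => Y.card = j),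
        (∑ S ∈ univ.filter (fun S : Finset (Fin n) => S.card = ℓ ∧ Y ⊆ S), F S) ^ 2) /
        (n.choose j * ((n - j).choose (ℓ - j)) ^ 2) := by
    intro j _
    have : ∑ Y ∈ univ.filter (fun Y : Finset (Fin n) => Y.card = j), (ugJDelta n ℓ F Y) ^ 2 =
      (∑ Y ∈ univ.filter (fun Y : Finset (Fin n) => Y.card = j),
        (∑ S ∈ univ.filter (fun S : Finset (Fin n) => S.card = ℓ ∧ Y ⊆ S), F S) ^ 2) /
        ((n - j).choose (ℓ - j)) ^ 2 := by
      rw [sum_div]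
      refine sum_congr rfl fun Y hY => ?_
      have hY : Y.card = j := by simpa using hY
      rw [ugJDelta, hY, div_pow]
    rw [this, div_div, mul_comm]
  set Q : ℕ → ℝ := fun j => (∑ Y ∈ univ.filter (fun Y : Finset (Fin n) => Y.card = j),
      (ugJDelta n ℓ F Y) ^ 2) / (Nat.choose n j : ℝ) with hQ
  have hQ0 : ∀ j, 0 ≤ Q j := fun j => by simp only [hQ]; positivity
  have hQsum : Q r ≤ ∑ j ∈ Finset.range (r + 1), Q j :=
    single_le_sum (f := Q) (fun j _ => hQ0 j) (by simp)
  have canc : ∀ (f : ℕ) (A B C : ℝ), (f.factorial : ℝ) ^ 2 * A / (B * (f.factorial * C) ^ 2)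
      = A / (B * C ^ 2) := by
    intro f A B C
    have : (f.factorial : ℝ) ^ 2 ≠ 0 := by positivity
    rw [mul_pow, mul_left_comm, mul_div_mul_left _ _ this]
  rw [canc, canc, ← hterm r (by omega)] at hspec
  set X := ∑ p ∈ ugJEdges n ℓ k, F p.1 * F p.2 with hX
  set N := ∑ S ∈ univ.filter (fun S : Finset (Fin n) => S.card = ℓ), F S ^ 2 with hN
  set Z := ∑ Y ∈ univ.filter (fun Y : Finset (Fin n) => Y.card = m),
        (∑ S ∈ univ.filter (fun S : Finset (Fin n) => S.card = ℓ ∧ Y ⊆ S), F S) ^ 2 with hZ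
  have hN' : ugJAvg n ℓ (fun S => F S ^ 2) = N / n.choose ℓ := rfl
  have hN0 : 0 ≤ N := by positivity
  have hnl : n - ℓ = n - m - k := by omega
  have q1 : (0:ℝ) < ℓ.choose k := by exact_mod_cast Nat.choose_pos (by omega)
  have q2 : (0:ℝ) < (n - ℓ).choose k := by exact_mod_cast Nat.choose_pos (by omega)
  have q3 : (0:ℝ) < (n - m).choose k := by exact_mod_cast Nat.choose_pos (by omega)
  have q4 : (0:ℝ) < n.choose m := by exact_mod_cast Nat.choose_pos (by omega)
  rw [Nat.cast_mul] at hs1 hs2 hcard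
  have b1 : (n.choose ℓ : ℝ) * (ℓ.choose k : ℝ) = n.choose m * (n - m).choose k := by
    have := Nat.choose_mul (n := n) (k := ℓ) (s := m) (by omega)
    rw [show ℓ - m = k by omega] at this
    rw [show ℓ.choose k = ℓ.choose m from (Nat.choose_symm_of_eq_add hℓdef).symm]
    exact_mod_cast this
  have hgap := choose_gap' (n - m) k hk1 (by omega)
  rw [← hnl, Nat.cast_sub (by omega)] at hgap
  have hexp : ∑ p ∈ ugJEdges n ℓ k, (F p.1 - F p.2) ^ 2 =
      2 * ((ℓ.choose k * (n - ℓ).choose k : ℝ) * N - X) := by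
    have : ∑ p ∈ ugJEdges n ℓ k, (F p.1 - F p.2) ^ 2 = ∑ p ∈ ugJEdges n ℓ k, F p.1 ^ 2
        + ∑ p ∈ ugJEdges n ℓ k, F p.2 ^ 2 - 2 * X := by
      rw [hX, mul_sum, ← sum_add_distrib, ← sum_sub_distrib]
      exact sum_congr rfl fun _ _ => by ring
    rw [this, hs1, hs2]; ring
  have hXN : X ≤ (ℓ.choose k * (n - ℓ).choose k : ℝ) * N := by
    have : 0 ≤ ∑ p ∈ ugJEdges n ℓ k, (F p.1 - F p.2) ^ 2 := by positivity
    linarith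
  have hLap : ugJLap n ℓ k F = N / n.choose ℓ -
      X / (ℓ.choose k * (n - ℓ).choose k * n.choose ℓ) := by
    unfold ugJLap
    rw [hexp, hcard]
    field_simp
  have hnpos : (0:ℝ) < n := by exact_mod_cast (show 0 < n by omega)
  have hmn : (n : ℝ) / 2 ≤ n - m := by
    have : (2 * m : ℝ) ≤ n := by exact_mod_cast (show 2 * m ≤ n by omega)
    linarith
  have hkr : (2 * k : ℝ) ≤ ℓ := by exact_mod_cast hkl.le
  set ε : ℝ := (ℓ : ℝ) ^ 2 / (2 * n) with hε
  have hp : (1 - ε) * (n - m).choose k ≤ (n - ℓ).choose k := by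
    have hpos : (0:ℝ) < n - m := by linarith
    refine le_of_mul_le_mul_left ?_ hpos
    refine le_trans ?_ hgap
    rw [← mul_assoc]
    refine mul_le_mul_of_nonneg_right ?_ q3.le
    have h1 : (k : ℝ) ^ 2 ≤ ε * (n / 2) := by
      rw [hε]; field_simp; nlinarith [Nat.cast_nonneg (α := ℝ) k]
    have h2 : ε * (n / 2) ≤ ε * (n - m) := mul_le_mul_of_nonneg_left hmn (by positivity)
    linarith
  set x := X / (ℓ.choose k * (n - ℓ).choose k * n.choose ℓ) with hx
  have hx1 : x ≤ N / n.choose ℓ := by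
    rw [hx, div_le_div_iff₀ (by positivity) p1]
    calc _ ≤ _ := mul_le_mul_of_nonneg_right hXN p1.le
      _ = _ := by ring
  have hX0 : 0 ≤ X := by
    refine sum_nonneg fun p hp => ?_
    simp only [ugJEdges, mem_filter, mem_univ, true_and] at hp
    exact mul_nonneg (hF _ hp.1).1 (hF _ hp.2.1).1
  have hx2 : (1 - ε) * x ≤ Z / (n.choose m * (n - m).choose k ^ 2) := by
    rw [hx, ← mul_div_assoc, div_le_div_iff₀ (by positivity) (by positivity)]
    calc _ = (X * (n.choose m * (n - m).choose k)) * ((1 - ε) * (n - m).choose k) := by ring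
      _ ≤ (X * (n.choose m * (n - m).choose k)) * (n - ℓ).choose k :=
        mul_le_mul_of_nonneg_left hp (by positivity)
      _ = X * ((n.choose m * (n - m).choose k) * (n - ℓ).choose k) := by ring
      _ ≤ Z * ((n.choose m * (n - m).choose k) * (n - ℓ).choose k) :=
        mul_le_mul_of_nonneg_right hedge (by positivity)
      _ = _ := by rw [← b1]; ring
  have hε0 : 0 ≤ ε := by positivity
  have hpow : (2:ℝ) ^ r ≤ 8 ^ r := pow_le_pow_left₀ (by norm_num) (by norm_num) r
  have hlast : 2 ^ r * (ℓ.choose r : ℝ) * Q r ≤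
      8 ^ r * (ℓ.choose r : ℝ) * ∑ j ∈ Finset.range (r + 1), Q j := by
    have := hQ0 r
    gcongr
  have hcoef : (2 * (ℓ : ℝ) ^ 2 + ℓ) / (2 * n) = 2 * ε + ℓ / (2 * n) := by
    rw [hε]; field_simp
  have hl2 : (0:ℝ) ≤ ℓ / (2 * n) := by positivity
  have hl3 : (ℓ : ℝ) ^ 2 / n = 2 * ε := by rw [hε]; field_simp
  rw [hLap, hcoef, hl3, ge_iff_le]
  rw [hN'] at hE hE0 ⊢
  set e2 := N / (n.choose ℓ : ℝ)
  set e1 := ugJAvg n ℓ F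
  have hspec' : (1 - β) * (e2 - 2 ^ r * (ℓ.choose r : ℝ) * Q r) ≤
    e2 - Z / (n.choose m * (n - m).choose k ^ 2) := hspec
  set T := 8 ^ r * (ℓ.choose r : ℝ) * ∑ j ∈ Finset.range (r + 1), Q j
  have f1 : (1 - β) * (e2 - T) ≤ (1 - β) * (e2 - 2 ^ r * (ℓ.choose r : ℝ) * Q r) :=
    mul_le_mul_of_nonneg_left (by linarith) (by linarith)
  have f2 : ε * x ≤ ε * e1 := mul_le_mul_of_nonneg_left (by linarith) hε0
  have f3 : 0 ≤ (1 - β) * (2 * ε * e1) :=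
    mul_nonneg (by linarith) (mul_nonneg (by linarith) (by linarith))
  have f4 : 0 ≤ ε * e1 := mul_nonneg hε0 (by linarith)
  have f5 : 0 ≤ (ℓ : ℝ) / (2 * n) * e1 := mul_nonneg hl2 (by linarith)
  have f6 : (1 - β) * ((1 - 2 * ε) * e1 - T + e2 - e1) =
      (1 - β) * (e2 - T) - (1 - β) * (2 * ε * e1) := by ring
  change (1 - β) * ((1 - 2 * ε) * e1 - T + e2 - e1) - _ ≤ _
  rw [f6]
  linarith
end

section
/- Let ε > 0, let α ∈ (0, 1/2), and let ℓ be a positive integer with αℓ ∈ ℕ and αℓ ≥ 1. Set r = ⌊32ε/α⌋ and suppose r ≤ ℓ/4. Then for every integer s with 0 ≤ s ≤ r, the binomial ratio satisfies C(ℓ−s, αℓ) / C(ℓ, αℓ) ≥ (1 − 4α/3)^r ≥ 1 − (4/3)·r·α ≥ 1 − 200ε. Consequently, in the Johnson graph J_{n,ℓ,α} (for n ≥ 2ℓ), every vertex U containing a fixed s-element set Y has at least a (1 − 200ε)-fraction of its neighbors V also containing Y; that is, the edge expansion of the s-restricted subcube induced by Y is at most 200ε. -/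
open Finset

theorem ratio_aux (α : ℝ) (hα0 : 0 < α) (hα : α < 1 / 2)
    (ℓ k : ℕ) (hk : (k : ℝ) = α * ℓ) (s : ℕ) (hs : 4 * s ≤ ℓ) :
    (1 - 4 * α / 3) ^ s * (Nat.choose ℓ k : ℝ) ≤ (Nat.choose (ℓ - s) k : ℝ) := by
  induction s with
  | zero => simp
  | succ s ih =>
    have ih := ih (by omega)
    obtain ⟨m, hm⟩ : ∃ m, ℓ = m + 1 + s := ⟨ℓ - (s + 1), by omega⟩
    have e1 : ℓ - s = m + 1 := by omega
    have e2 : ℓ - (s + 1) = m := by omega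
    rw [e1] at ih
    rw [e2]
    have h := Nat.choose_mul_succ_eq m k
    have hR : (m.choose k : ℝ) * (m + 1) = ((m + 1).choose k : ℝ) * ((m + 1 - k : ℕ) : ℝ) := by
      exact_mod_cast h
    have hsub : (m + 1 : ℝ) - k ≤ ((m + 1 - k : ℕ) : ℝ) := by
      have : (m + 1 : ℕ) ≤ (m + 1 - k) + k := by omega
      have : ((m + 1 : ℕ) : ℝ) ≤ ((m + 1 - k : ℕ) : ℝ) + k := by exact_mod_cast this
      push_cast at this
      linarith
    have hm4 : (3 : ℝ) * ℓ ≤ 4 * (m + 1) := by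
      have : 3 * ℓ ≤ 4 * (m + 1) := by omega
      exact_mod_cast this
    have hc : (0 : ℝ) ≤ ((m + 1).choose k : ℝ) := by positivity
    have hb : (0 : ℝ) ≤ 1 - 4 * α / 3 := by linarith
    have hkk : (1 - 4 * α / 3) * (m + 1) ≤ ((m + 1 - k : ℕ) : ℝ) := by
      nlinarith
    have hpos : (0 : ℝ) < m + 1 := by positivity
    have h1 : (1 - 4 * α / 3) * ((m + 1).choose k : ℝ) ≤ m.choose k := by
      refine le_of_mul_le_mul_right ?_ hpos
      rw [hR]
      calc _ = ((m + 1).choose k : ℝ) * ((1 - 4 * α / 3) * (m + 1)) := by ring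
        _ ≤ _ := mul_le_mul_of_nonneg_left hkk hc
    calc _ = (1 - 4 * α / 3) * ((1 - 4 * α / 3) ^ s * (Nat.choose ℓ k : ℝ)) := by ring
      _ ≤ (1 - 4 * α / 3) * ((m + 1).choose k : ℝ) := mul_le_mul_of_nonneg_left ih hb
      _ ≤ _ := h1

theorem count_aux (n ℓ k : ℕ) (hkl : k ≤ ℓ) (Y U : Finset (Fin n)) (hU : U.card = ℓ)
    (hY : Y ⊆ U) :
    (univ.filter (fun W : Finset (Fin n) =>
            W.card = ℓ ∧ (U ∩ W).card = ℓ - k ∧ Y ⊆ W)).card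
      = Nat.choose (ℓ - Y.card) k * Nat.choose (n - ℓ) k := by
  have h1 : (U \ Y).card = ℓ - Y.card := by rw [card_sdiff_of_subset hY, hU]
  have h2 : Uᶜ.card = n - ℓ := by rw [card_compl, hU, Fintype.card_fin]
  rw [← h1, ← h2, ← card_powersetCard, ← card_powersetCard, ← card_product]
  refine card_bij' (fun W _ => (U \ W, W \ U)) (fun p _ => (U \ p.1) ∪ p.2) ?_ ?_ ?_ ?_
  · intro W hW
    simp only [mem_filter, mem_univ, true_and] at hW
    obtain ⟨a, b, c⟩ := hW
    have e1 := card_sdiff_add_card_inter U W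
    have e2 := card_sdiff_add_card_inter W U
    rw [inter_comm] at e2
    simp only [mem_product, mem_powersetCard]
    refine ⟨⟨sdiff_subset_sdiff le_rfl c, by omega⟩, ?_, by omega⟩
    intro x hx
    simp at hx ⊢
    exact hx.2
  · rintro ⟨A, B⟩ hp
    simp only [mem_product, mem_powersetCard] at hp
    obtain ⟨⟨a, b⟩, c, d⟩ := hp
    have hAU : A ⊆ U := a.trans sdiff_subset
    have hBU : ∀ x ∈ B, x ∉ U := fun x hx => by simpa using c hx
    have hc : (U \ A).card = ℓ - k := by rw [card_sdiff_of_subset hAU, hU, b]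
    simp only [mem_filter, mem_univ, true_and]
    refine ⟨?_, ?_, ?_⟩
    · rw [card_union_of_disjoint, hc, d]
      · omega
      · rw [disjoint_left]
        intro x hx hxB
        exact hBU x hxB (mem_sdiff.1 hx).1
    · rw [← hc]
      congr 1
      ext x
      have := hBU x
      simp only [mem_inter, mem_union, mem_sdiff]
      tauto
    · intro x hx
      have h3 := hY hx
      have h4 : x ∉ A := fun h => (mem_sdiff.1 (a h)).2 hx
      simp [h3, h4]
  · intro W _
    ext x
    simp only [mem_union, mem_sdiff]
    tauto
  · rintro ⟨A, B⟩ hp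
    simp only [mem_product, mem_powersetCard] at hp
    obtain ⟨⟨a, b⟩, c, d⟩ := hp
    have hAU : A ⊆ U := a.trans sdiff_subset
    have hBU : ∀ x ∈ B, x ∉ U := fun x hx => by simpa using c hx
    refine Prod.ext ?_ ?_
    · ext x
      have := hBU x
      have := @hAU x
      simp only [mem_union, mem_sdiff]
      tauto
    · ext x
      have := hBU x
      simp only [mem_union, mem_sdiff]
      tauto



/-- bounded expansion of `s`-restricted subcubes of the Johnson graph
`J_{n,ℓ,α}` with `k = αℓ` and `r = ⌊32ε/α⌋ ≤ ℓ/4`: the binomial ratio chain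
`C(ℓ−s, αℓ)/C(ℓ, αℓ) ≥ (1 − 4α/3)^r ≥ 1 − (4/3)rα ≥ 1 − 200ε`, and consequently every
vertex `U ⊇ Y` (with `|Y| = s ≤ r`) has at least a `(1 − 200ε)`-fraction of its
neighbors containing `Y`. -/
theorem stmt17 (ε α : ℝ) (hε : 0 < ε) (hα0 : 0 < α) (hα : α < 1 / 2)
    (ℓ k : ℕ) (hℓ : 1 ≤ ℓ) (hk : (k : ℝ) = α * ℓ) (hk1 : 1 ≤ k)
    (r : ℕ) (hr : r = ⌊32 * ε / α⌋₊) (hr4 : 4 * r ≤ ℓ) :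
    (∀ s : ℕ, s ≤ r →
      (Nat.choose (ℓ - s) k : ℝ) / (Nat.choose ℓ k : ℝ) ≥ (1 - 4 * α / 3) ^ r ∧
      (1 - 4 * α / 3) ^ r ≥ 1 - (4 / 3) * r * α ∧
      1 - (4 / 3) * r * α ≥ 1 - 200 * ε) ∧
    (∀ n : ℕ, 2 * ℓ ≤ n → ∀ s : ℕ, s ≤ r → ∀ Y U : Finset (Fin n),
      Y.card = s → U.card = ℓ → Y ⊆ U →
      ((univ.filter (fun W : Finset (Fin n) =>
            W.card = ℓ ∧ (U ∩ W).card = ℓ - k ∧ Y ⊆ W)).card : ℝ)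
        ≥ (1 - 200 * ε) *
            ((univ.filter (fun W : Finset (Fin n) =>
              W.card = ℓ ∧ (U ∩ W).card = ℓ - k)).card : ℝ)) := by
  have hkl : k ≤ ℓ := by
    have h : (k : ℝ) ≤ ℓ := by
      rw [hk]
      have : (0 : ℝ) ≤ ℓ := by positivity
      nlinarith
    exact_mod_cast h
  have hb : (0 : ℝ) ≤ 1 - 4 * α / 3 := by linarith
  have hrα : (r : ℝ) * α ≤ 32 * ε := by
    have h : (r : ℝ) ≤ 32 * ε / α := by
      rw [hr]
      exact Nat.floor_le (by positivity)
    rwa [le_div_iff₀ hα0] at h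
  have hcpos : (0 : ℝ) < (Nat.choose ℓ k : ℝ) := by exact_mod_cast Nat.choose_pos hkl
  have main : ∀ s : ℕ, s ≤ r →
      (Nat.choose (ℓ - s) k : ℝ) / (Nat.choose ℓ k : ℝ) ≥ (1 - 4 * α / 3) ^ r ∧
      (1 - 4 * α / 3) ^ r ≥ 1 - (4 / 3) * r * α ∧
      1 - (4 / 3) * r * α ≥ 1 - 200 * ε := by
    intro s hs
    refine ⟨?_, ?_, by nlinarith⟩
    · rw [ge_iff_le, le_div_iff₀ hcpos]
      refine le_trans ?_ (ratio_aux α hα0 hα ℓ k hk s (by omega))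
      exact mul_le_mul_of_nonneg_right
        (pow_le_pow_of_le_one hb (by linarith) hs) hcpos.le
    · have h := one_add_mul_le_pow (a := -(4 * α / 3)) (by linarith) r
      have e : (1 + -(4 * α / 3)) = 1 - 4 * α / 3 := by ring
      rw [e] at h
      linarith
  refine ⟨main, ?_⟩
  intro n hn s hs Y U hYs hU hYU
  obtain ⟨h1, h2, h3⟩ := main s hs
  have h4 : 1 - 200 * ε ≤ (Nat.choose (ℓ - s) k : ℝ) / (Nat.choose ℓ k : ℝ) := by linarith
  rw [le_div_iff₀ hcpos] at h4
  have c1 := count_aux n ℓ k hkl Y U hU hYU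
  have c2 := count_aux n ℓ k hkl ∅ U hU (empty_subset _)
  simp only [empty_subset, and_true, card_empty, Nat.sub_zero] at c2
  rw [c1, c2, hYs]
  push_cast
  rw [ge_iff_le, ← mul_assoc]
  exact mul_le_mul_of_nonneg_right h4 (by positivity)
end

section
/- Let I = (G, Π) be an affine unique games instance over a finite abelian group Σ, on a finite weighted graph G = (V,E) with stationary distribution π and edge constraints X_u − X_v = a_{uv}. Let μ be a shift-symmetric probability distribution over assignments X ∈ Σ^V, i.e. for every s ∈ Σ the globally shifted assignment X + s has the same law as X. Define Ψ(μ) = E_{u,v∼π}[ Σ_{s∈Σ} Pr_μ[X_v − X_u = s]² · E_μ[val_v(X) | X_v − X_u = s] ], where val_v(X) = E_{w∼v}[1(X_v − X_w = a_{vw})] (a neighbor w of v sampled proportionally to the weight of (v,w)), and a term is taken to be 0 when the conditioning event has probability 0. If Ψ(μ) ≥ δ, then the condition-and-round procedure achieves expected value at least δ: E_{u∼π}[ E_Y[val(Y)] ] ≥ δ, where given u the random assignment Y ∈ Σ^V has independent coordinates with Y_v distributed according to the conditional law of X_v given X_u = 0, and val(Y) = E_{(v,w)∼E}[1(Y_v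 − Y_w = a_{vw})] over a weighted random edge. (Shift-symmetry guarantees Pr_μ[X_u = 0] = 1/|Σ| > 0, so the conditioning is well defined.) -/
open Finset

lemma aux_cond {V : Type*} [Fintype V] [DecidableEq V]
    {Γ : Type*} [Fintype Γ] [AddCommGroup Γ] [DecidableEq Γ]
    (μ : (V → Γ) → ℝ) (hshift : ∀ (s : Γ) (X : V → Γ), μ (fun v => X v + s) = μ X)
    (u : V) (F : (V → Γ) → ℝ) (hF : ∀ (s : Γ) (X : V → Γ), F (fun v => X v + s) = F X) :
    ∑ X : V → Γ, μ X * F X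
      = (Fintype.card Γ : ℝ) * ∑ X : V → Γ, μ X * (F X * (if X u = 0 then (1 : ℝ) else 0)) := by
  have h1 : ∀ X : V → Γ, μ X * F X = ∑ t : Γ, μ X * (F X * (if X u = t then (1 : ℝ) else 0)) := by
    intro X
    rw [← Finset.mul_sum, ← Finset.mul_sum]
    simp
  rw [Finset.sum_congr rfl (fun X _ => h1 X), Finset.sum_comm]
  have h2 : ∀ t : Γ, ∑ X : V → Γ, μ X * (F X * (if X u = t then (1 : ℝ) else 0))
      = ∑ X : V → Γ, μ X * (F X * (if X u = 0 then (1 : ℝ) else 0)) := by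
    intro t
    rw [← Equiv.sum_comp (Equiv.addRight (fun _ : V => t))]
    refine Finset.sum_congr rfl fun X _ => ?_
    have e : (Equiv.addRight (fun _ : V => t)) X = fun v => X v + t := rfl
    rw [e, hshift, hF]
    simp
  rw [Finset.sum_congr rfl (fun t _ => h2 t)]
  simp

lemma aux_total {V : Type*} [Fintype V] [DecidableEq V] {Γ : Type*} [Fintype Γ]
    (p : V → Γ → ℝ) (hp1 : ∀ v, ∑ t, p v t = 1) :
    ∑ Y : V → Γ, ∏ v, p v (Y v) = 1 := by
  have := Finset.prod_univ_sum (fun _ : V => (Finset.univ : Finset Γ)) p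
  rw [Fintype.piFinset_univ] at this
  rw [← this]
  simp [hp1]

lemma aux_pair {V : Type*} [Fintype V] [DecidableEq V] {Γ : Type*} [Fintype Γ] [DecidableEq Γ]
    (p : V → Γ → ℝ) (hp1 : ∀ v, ∑ t, p v t = 1) (v x : V) (hvx : v ≠ x) (s t : Γ) :
    ∑ Y : V → Γ, (∏ i, p i (Y i)) * ((if Y v = s then (1 : ℝ) else 0) * (if Y x = t then 1 else 0))
      = p v s * p x t := by
  have := Finset.prod_univ_sum (fun _ : V => (Finset.univ : Finset Γ))
    (fun i y => p i y * ((if i = v then (if y = s then (1 : ℝ) else 0) else 1) *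
      (if i = x then (if y = t then (1 : ℝ) else 0) else 1)))
  rw [Fintype.piFinset_univ] at this
  simp only [Finset.prod_mul_distrib, Finset.prod_ite_eq', Finset.mem_univ, if_true] at this
  rw [← this]
  have h : ∀ i, (∑ y, p i y * ((if i = v then (if y = s then (1 : ℝ) else 0) else 1) *
      (if i = x then (if y = t then (1 : ℝ) else 0) else 1)))
      = (if i = v then p v s else 1) * (if i = x then p x t else 1) := by
    intro i
    by_cases h1 : i = v
    · subst h1
      simp [hvx]
    · by_cases h2 : i = x
      · subst h2
        simp [h1]
      · simp [h1, h2, hp1]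
  rw [Finset.prod_congr rfl (fun i _ => h i), Finset.prod_mul_distrib]
  simp

lemma aux_edge {V : Type*} [Fintype V] [DecidableEq V]
    {Γ : Type*} [Fintype Γ] [AddCommGroup Γ] [DecidableEq Γ]
    (μ : (V → Γ) → ℝ) (hμnn : ∀ X, 0 ≤ μ X) (u : V)
    (p : V → Γ → ℝ) (hp1 : ∀ v, ∑ t, p v t = 1)
    (hp : ∀ v s, p v s = ∑ X : V → Γ, μ X * (if X v - X u = s then (1 : ℝ) else 0))
    (v x : V) (b : Γ) :
    ∑ s, p v s * ∑ X : V → Γ, μ X * (if X v - X u = s then (1 : ℝ) else 0) *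
        (if X v - X x = b then (1 : ℝ) else 0)
      ≤ ∑ Y : V → Γ, (∏ i, p i (Y i)) * (if Y v - Y x = b then (1 : ℝ) else 0) := by
  have hp0 : ∀ v s, 0 ≤ p v s := by
    intro v s
    rw [hp]
    exact Finset.sum_nonneg fun X _ => mul_nonneg (hμnn X) (by split_ifs <;> norm_num)
  by_cases hvx : v = x
  · subst hvx
    simp only [sub_self]
    rw [← Finset.sum_mul, aux_total p hp1]
    have : ∀ s, p v s * ∑ X : V → Γ, μ X * (if X v - X u = s then (1 : ℝ) else 0) *
        (if 0 = b then (1 : ℝ) else 0) ≤ p v s * (if 0 = b then (1 : ℝ) else 0) := by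
      intro s
      rw [← Finset.sum_mul, ← hp]
      refine mul_le_mul_of_nonneg_left ?_ (hp0 v s)
      refine mul_le_of_le_one_left (by split_ifs <;> norm_num) ?_
      rw [← hp1 v]
      exact Finset.single_le_sum (fun i _ => hp0 v i) (Finset.mem_univ s)
    refine (Finset.sum_le_sum fun s _ => this s).trans ?_
    rw [← Finset.sum_mul, hp1]
  · have h1 : ∀ Y : V → Γ, (∏ i, p i (Y i)) * (if Y v - Y x = b then (1 : ℝ) else 0)
        = ∑ s, (∏ i, p i (Y i)) *
          ((if Y v = s then (1 : ℝ) else 0) * (if Y x = s - b then 1 else 0)) := by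
      intro Y
      rw [← Finset.mul_sum]
      have : (Y v - Y x = b) ↔ (Y x = Y v - b) := by
        constructor
        · rintro rfl; abel
        · intro h; rw [h]; abel
      simp only [this, ite_mul, one_mul, zero_mul, Finset.sum_ite_eq, Finset.mem_univ, if_true]
    rw [Finset.sum_congr rfl (fun Y _ => h1 Y), Finset.sum_comm]
    refine Finset.sum_le_sum fun s _ => ?_
    rw [aux_pair p hp1 v x hvx]
    refine mul_le_mul_of_nonneg_left ?_ (hp0 v s)
    rw [hp x]
    refine Finset.sum_le_sum fun X _ => ?_
    rw [mul_assoc]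
    refine mul_le_mul_of_nonneg_left ?_ (hμnn X)
    by_cases h2 : X v - X u = s
    · by_cases h3 : X v - X x = b
      · have : X x - X u = s - b := by rw [← h2, ← h3]; abel
        simp [h2, h3, this]
      · simp only [h3, if_false, mul_zero]; split_ifs <;> norm_num
    · simp only [h2, if_false, zero_mul]; split_ifs <;> norm_num

/-- the Condition & Round algorithm: for a shift-symmetric distribution μ
over assignments of an affine unique games instance over a finite abelian group Γ, if the
conditioned shift potential Ψ(μ) is at least δ, then conditioning on a stationary-random
vertex and rounding coordinates independently achieves expected value at least δ. -/
theorem stmt18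
    {V : Type*} [Fintype V] [Nonempty V] [DecidableEq V]
    {Γ : Type*} [Fintype Γ] [AddCommGroup Γ] [DecidableEq Γ]
    (w : V → V → ℝ) (hsymm : ∀ u v, w u v = w v u) (hnn : ∀ u v, 0 ≤ w u v)
    (deg : V → ℝ) (hdeg : ∀ v, deg v = ∑ u, w v u) (hdegpos : ∀ v, 0 < deg v)
    (pi : V → ℝ) (hpi : ∀ v, pi v = deg v / ∑ u, deg u)
    (a : V → V → Γ) (ha : ∀ u v, a v u = - a u v)
    (μ : (V → Γ) → ℝ) (hμnn : ∀ X, 0 ≤ μ X) (hμ1 : ∑ X : V → Γ, μ X = 1)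
    (hshift : ∀ (s : Γ) (X : V → Γ), μ (fun v => X v + s) = μ X)
    (valv : V → (V → Γ) → ℝ)
    (hvalv : ∀ v X, valv v X
      = (∑ u, w v u * (if X v - X u = a v u then (1 : ℝ) else 0)) / deg v)
    (Pr : V → V → Γ → ℝ)
    (hPr : ∀ v u s, Pr v u s = ∑ X : V → Γ, μ X * (if X v - X u = s then (1 : ℝ) else 0))
    (condval : V → V → Γ → ℝ)
    (hcond : ∀ v u s, condval v u s =
      if Pr v u s = 0 then 0
      else (∑ X : V → Γ, μ X * (if X v - X u = s then (1 : ℝ) else 0) * valv v X)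
            / Pr v u s)
    (Ψ : ℝ)
    (hΨ : Ψ = ∑ u, ∑ v, pi u * pi v * ∑ s : Γ, (Pr v u s) ^ 2 * condval v u s)
    (q : V → V → Γ → ℝ)
    (hq : ∀ u v t, q u v t =
      (∑ X : V → Γ, μ X * (if X v = t ∧ X u = 0 then (1 : ℝ) else 0))
        / (∑ X : V → Γ, μ X * (if X u = 0 then (1 : ℝ) else 0)))
    (δ : ℝ) (hδ : Ψ ≥ δ) :
    ∑ u, pi u * (∑ Y : V → Γ, (∏ v, q u v (Y v)) *
        ((∑ v, ∑ x, w v x * (if Y v - Y x = a v x then (1 : ℝ) else 0)) / (∑ v, deg v)))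
      ≥ δ := by
  have hc : ∀ u, (Fintype.card Γ : ℝ) * ∑ X : V → Γ, μ X * (if X u = 0 then (1 : ℝ) else 0) = 1 := by
    intro u
    have := aux_cond μ hshift u (fun _ => 1) (fun _ _ => rfl)
    simpa [hμ1] using this.symm
  have hqP : ∀ u v s, q u v s = Pr v u s := by
    intro u v s
    have h := aux_cond μ hshift u (fun X => if X v - X u = s then (1 : ℝ) else 0)
      (fun t X => by simp)
    have hN : ∀ X : V → Γ, (if X v - X u = s then (1 : ℝ) else 0) * (if X u = 0 then (1 : ℝ) else 0)
        = if X v = s ∧ X u = 0 then (1 : ℝ) else 0 := by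
      intro X
      by_cases h0 : X u = 0 <;> simp [h0]
    simp only [hN] at h
    have hne : (∑ X : V → Γ, μ X * (if X u = 0 then (1 : ℝ) else 0)) ≠ 0 := by
      intro h0
      have := hc u
      rw [h0] at this
      simp at this
    rw [hq, hPr, h, div_eq_iff hne, mul_right_comm, hc u, one_mul]
  have hP1 : ∀ u v, ∑ s, Pr v u s = 1 := by
    intro u v
    simp only [hPr]
    rw [Finset.sum_comm]
    refine Eq.trans ?_ hμ1
    refine Finset.sum_congr rfl fun X _ => ?_
    rw [← Finset.mul_sum]
    simp
  have hD : 0 < ∑ v, deg v := Finset.sum_pos (fun v _ => hdegpos v) Finset.univ_nonempty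
  have hpi0 : ∀ u, 0 ≤ pi u := fun u => by rw [hpi]; exact div_nonneg (hdegpos u).le hD.le
  refine le_trans hδ ?_
  rw [hΨ]
  refine Finset.sum_le_sum fun u _ => ?_
  simp only [mul_assoc]
  rw [← Finset.mul_sum]
  refine mul_le_mul_of_nonneg_left ?_ (hpi0 u)
  have hcv : ∀ v s, (Pr v u s) ^ 2 * condval v u s = Pr v u s *
      ∑ X : V → Γ, μ X * (if X v - X u = s then (1 : ℝ) else 0) * valv v X := by
    intro v s
    rw [hcond]
    split_ifs with h
    · simp [h]
    · field_simp
  have hL : ∀ v, pi v * ∑ s, (Pr v u s) ^ 2 * condval v u s = (∑ x, w v x *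
      ∑ s, Pr v u s * ∑ X : V → Γ, μ X * (if X v - X u = s then (1 : ℝ) else 0) *
        (if X v - X x = a v x then (1 : ℝ) else 0)) / ∑ v, deg v := by
    intro v
    have hd := (hdegpos v).ne'
    have hval : ∀ s, (Pr v u s) ^ 2 * condval v u s = (∑ x, w v x * (Pr v u s *
        ∑ X : V → Γ, μ X * (if X v - X u = s then (1 : ℝ) else 0) *
        (if X v - X x = a v x then (1 : ℝ) else 0))) / deg v := by
      intro s
      rw [hcv]
      simp only [hvalv]
      simp only [Finset.mul_sum, Finset.sum_div]
      rw [Finset.sum_comm]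
      refine Finset.sum_congr rfl fun x _ => Finset.sum_congr rfl fun X _ => ?_
      ring
    rw [Finset.sum_congr rfl (fun s _ => hval s), ← Finset.sum_div, hpi, Finset.sum_comm]
    simp only [← Finset.mul_sum]
    field_simp
  have hR : (∑ Y : V → Γ, (∏ v, q u v (Y v)) *
        ((∑ v, ∑ x, w v x * (if Y v - Y x = a v x then (1 : ℝ) else 0)) / (∑ v, deg v)))
      = (∑ v, ∑ x, w v x * ∑ Y : V → Γ, (∏ i, Pr i u (Y i)) *
        (if Y v - Y x = a v x then (1 : ℝ) else 0)) / ∑ v, deg v := by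
    simp only [hqP]
    simp only [← mul_div_assoc]
    rw [← Finset.sum_div]
    congr 1
    simp only [Finset.mul_sum]
    rw [Finset.sum_comm]
    refine Finset.sum_congr rfl fun v _ => ?_
    rw [Finset.sum_comm]
    refine Finset.sum_congr rfl fun x _ => Finset.sum_congr rfl fun Y _ => ?_
    ring
  rw [hR, Finset.sum_congr rfl (fun v _ => hL v), ← Finset.sum_div]
  refine div_le_div_of_nonneg_right ?_ hD.le
  refine Finset.sum_le_sum fun v _ => Finset.sum_le_sum fun x _ => ?_
  exact mul_le_mul_of_nonneg_left
    (aux_edge μ hμnn u (fun v s => Pr v u s) (hP1 u) (fun v s => hPr v u s) v x (a v x)) (hnn v x)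
end

section
/- Let I = (G, Π) be an affine unique games instance over a finite abelian group Σ, on a finite weighted graph G = (V,E) with stationary distribution π and edge constraints X_u − X_v = a_{uv}. Let 0 < ν < β < 1 and let p : [0,1] → ℝ satisfy 0 ≤ p(x) ≤ 1 and p(x) ≤ x/(β−ν) + ν for every x ∈ [0,1]. Let μ be a shift-symmetric probability distribution over assignments X ∈ Σ^V (for every s ∈ Σ, X + s has the same law as X), and let X, X' be independent samples from μ. Define the approximate shift-partition potential Φ_{β,ν}(μ) = E_{X,X'}[ Σ_{s∈Σ} ( E_{u∼π}[ 1(X_u − X'_u = s) · p(val_u(X)) ] )² ], and the conditioned shift potential Ψ(μ) = E_{u,v∼π}[ Σ_{s∈Σ} Pr_μ[X_v − X_u = s]² · E_μ[val_v(X) | X_v − X_u = s] ] (terms with probability-0 conditioning taken to be 0). Then Φ_{β,ν}(μ) ≤ Ψ(μ)/(β−ν) + ν. -/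
open Finset

/-- the approximate shift-partition potential is bounded by the conditioned
shift potential: Φ_{β,ν}(μ) ≤ Ψ(μ)/(β−ν) + ν, for any shift-symmetric distribution μ over
assignments of an affine unique games instance and any approximate indicator p with
0 ≤ p ≤ 1 and p(x) ≤ x/(β−ν) + ν on [0,1]. -/
theorem stmt19
    {V : Type*} [Fintype V] [Nonempty V] [DecidableEq V]
    {Γ : Type*} [Fintype Γ] [AddCommGroup Γ] [DecidableEq Γ]
    (w : V → V → ℝ) (hsymm : ∀ u v, w u v = w v u) (hnn : ∀ u v, 0 ≤ w u v)
    (deg : V → ℝ) (hdeg : ∀ v, deg v = ∑ u, w v u) (hdegpos : ∀ v, 0 < deg v)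
    (pi : V → ℝ) (hpi : ∀ v, pi v = deg v / ∑ u, deg u)
    (a : V → V → Γ) (ha : ∀ u v, a v u = - a u v)
    (β ν : ℝ) (hν0 : 0 < ν) (hνβ : ν < β) (hβ1 : β < 1)
    (p : ℝ → ℝ)
    (hp01 : ∀ x : ℝ, 0 ≤ x → x ≤ 1 → 0 ≤ p x ∧ p x ≤ 1)
    (hpub : ∀ x : ℝ, 0 ≤ x → x ≤ 1 → p x ≤ x / (β - ν) + ν)
    (μ : (V → Γ) → ℝ) (hμnn : ∀ X, 0 ≤ μ X) (hμ1 : ∑ X : V → Γ, μ X = 1)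
    (hshift : ∀ (s : Γ) (X : V → Γ), μ (fun v => X v + s) = μ X)
    (valv : V → (V → Γ) → ℝ)
    (hvalv : ∀ v X, valv v X
      = (∑ u, w v u * (if X v - X u = a v u then (1 : ℝ) else 0)) / deg v)
    (Pr : V → V → Γ → ℝ)
    (hPr : ∀ v u s, Pr v u s = ∑ X : V → Γ, μ X * (if X v - X u = s then (1 : ℝ) else 0))
    (condval : V → V → Γ → ℝ)
    (hcond : ∀ v u s, condval v u s =
      if Pr v u s = 0 then 0
      else (∑ X : V → Γ, μ X * (if X v - X u = s then (1 : ℝ) else 0) * valv v X)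
            / Pr v u s)
    (Ψ : ℝ)
    (hΨ : Ψ = ∑ u, ∑ v, pi u * pi v * ∑ s : Γ, (Pr v u s) ^ 2 * condval v u s)
    (Φ : ℝ)
    (hΦ : Φ = ∑ X : V → Γ, ∑ X' : V → Γ, μ X * μ X' *
      ∑ s : Γ,
        (∑ u, pi u * ((if X u - X' u = s then (1 : ℝ) else 0) * p (valv u X))) ^ 2) :
    Φ ≤ Ψ / (β - ν) + ν := by
  have hS : 0 < ∑ u, deg u := Finset.sum_pos (fun i _ => hdegpos i) Finset.univ_nonempty
  have hpinn : ∀ v, 0 ≤ pi v := fun v => by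
    rw [hpi]; exact div_nonneg (hdegpos v).le hS.le
  have hpi1 : ∑ v, pi v = 1 := by
    simp only [hpi]; rw [← Finset.sum_div]; exact div_self hS.ne'
  have hv0 : ∀ v X, 0 ≤ valv v X := fun v X => by
    rw [hvalv]
    refine div_nonneg (Finset.sum_nonneg fun u _ => mul_nonneg (hnn v u) ?_) (hdegpos v).le
    split_ifs <;> norm_num
  have hv1 : ∀ v X, valv v X ≤ 1 := fun v X => by
    rw [hvalv, div_le_one (hdegpos v), hdeg]
    refine Finset.sum_le_sum fun u _ => ?_
    refine mul_le_of_le_one_right (hnn v u) ?_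
    split_ifs <;> norm_num
  have hb : 0 < β - ν := sub_pos.2 hνβ
  -- the indicator that X and X' agree on the difference of v and u
  let D : (V → Γ) → (V → Γ) → V → V → ℝ := fun X X' u v =>
    if X v - X u = X' v - X' u then 1 else 0
  have hD0 : ∀ X X' u v, 0 ≤ D X X' u v := fun X X' u v => by
    simp only [D]; split_ifs <;> norm_num
  have hD1 : ∀ X X' u v, D X X' u v ≤ 1 := fun X X' u v => by
    simp only [D]; split_ifs <;> norm_num
  have hind : ∀ x y : Γ, (∑ s : Γ, (if x = s then (1 : ℝ) else 0) * (if y = s then (1 : ℝ) else 0))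
      = if x = y then 1 else 0 := fun x y => by
    simp
  have hsq : ∀ X X' : V → Γ, ∑ s : Γ,
        (∑ u, pi u * ((if X u - X' u = s then (1 : ℝ) else 0) * p (valv u X))) ^ 2
      = ∑ u, ∑ v, pi u * pi v * (p (valv u X) * p (valv v X)) * D X X' u v := fun X X' => by
    simp only [sq, Finset.sum_mul_sum]
    rw [Finset.sum_comm]
    refine Finset.sum_congr rfl fun u _ => ?_
    rw [Finset.sum_comm]
    refine Finset.sum_congr rfl fun v _ => ?_
    have hDe : D X X' u v = if X u - X' u = X v - X' v then 1 else 0 := by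
      simp only [D]
      congr 1
      apply propext
      constructor <;> intro h
      · rw [sub_eq_sub_iff_add_eq_add] at h ⊢
        rw [add_comm, ← h, add_comm]
      · rw [sub_eq_sub_iff_add_eq_add] at h ⊢
        rw [← h, add_comm]
    rw [hDe, ← hind, Finset.mul_sum]
    refine Finset.sum_congr rfl fun s _ => ?_
    ring
  have hpt : ∀ X X' : V → Γ, ∑ u, ∑ v, pi u * pi v * (p (valv u X) * p (valv v X)) * D X X' u v
      ≤ (∑ u, ∑ v, pi u * pi v * (D X X' u v * valv v X)) / (β - ν) + ν := fun X X' => by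
    have hone : ν = ∑ u, ∑ v, pi u * pi v * ν := by
      simp only [← Finset.sum_mul, ← Finset.mul_sum, hpi1]; ring
    conv_rhs => rw [hone]
    simp only [Finset.sum_div]
    rw [← Finset.sum_add_distrib]
    refine Finset.sum_le_sum fun u _ => ?_
    rw [← Finset.sum_add_distrib]
    refine Finset.sum_le_sum fun v _ => ?_
    rw [← hone]
    have h1 := hp01 _ (hv0 u X) (hv1 u X)
    have h2 := hp01 _ (hv0 v X) (hv1 v X)
    have h3 := hpub _ (hv0 v X) (hv1 v X)
    have h4 : p (valv u X) * p (valv v X) ≤ valv v X / (β - ν) + ν :=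
      (mul_le_of_le_one_left h2.1 h1.2).trans h3
    have h5 : p (valv u X) * p (valv v X) * D X X' u v
        ≤ D X X' u v * valv v X / (β - ν) + ν := by
      calc _ ≤ (valv v X / (β - ν) + ν) * D X X' u v :=
            mul_le_mul_of_nonneg_right h4 (hD0 _ _ _ _)
        _ = D X X' u v * valv v X / (β - ν) + ν * D X X' u v := by ring
        _ ≤ _ := by
          have := mul_le_of_le_one_right hν0.le (hD1 X X' u v)
          linarith
    calc _ = pi u * pi v * (p (valv u X) * p (valv v X) * D X X' u v) := by ring
      _ ≤ pi u * pi v * (D X X' u v * valv v X / (β - ν) + ν) :=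
        mul_le_mul_of_nonneg_left h5 (mul_nonneg (hpinn u) (hpinn v))
      _ = _ := by ring
  have hPc : ∀ v u s, (Pr v u s) ^ 2 * condval v u s
      = (∑ X : V → Γ, μ X * (if X v - X u = s then (1 : ℝ) else 0) * valv v X)
        * ∑ X' : V → Γ, μ X' * (if X' v - X' u = s then (1 : ℝ) else 0) := fun v u s => by
    rw [hcond, ← hPr]
    split_ifs with h
    · rw [h]; ring
    · field_simp
  have hPsi : Ψ = ∑ X : V → Γ, ∑ X' : V → Γ, μ X * μ X' *
      ∑ u, ∑ v, pi u * pi v * (D X X' u v * valv v X) := by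
    have e : ∀ u v, pi u * pi v * ∑ s : Γ, (Pr v u s) ^ 2 * condval v u s
        = ∑ X : V → Γ, ∑ X' : V → Γ, μ X * μ X' * (pi u * pi v * (D X X' u v * valv v X)) := by
      intro u v
      simp only [hPc, Finset.sum_mul_sum]
      rw [Finset.sum_comm, Finset.mul_sum]
      refine Finset.sum_congr rfl fun X _ => ?_
      rw [Finset.sum_comm, Finset.mul_sum]
      refine Finset.sum_congr rfl fun X' _ => ?_
      simp only [D]
      rw [← hind, Finset.sum_mul, Finset.mul_sum, Finset.mul_sum, Finset.mul_sum]
      refine Finset.sum_congr rfl fun s _ => ?_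
      ring
    rw [hΨ]
    simp only [e, Finset.mul_sum]
    have c1 : ∀ f : V → V → (V → Γ) → (V → Γ) → ℝ,
        ∑ u, ∑ v, ∑ X, ∑ X', f u v X X' = ∑ X, ∑ X', ∑ u, ∑ v, f u v X X' := by
      intro f
      have q := Finset.sum_comm (s := (Finset.univ : Finset (V × V)))
        (t := (Finset.univ : Finset ((V → Γ) × (V → Γ))))
        (f := fun a b => f a.1 a.2 b.1 b.2)
      simpa only [Fintype.sum_prod_type] using q
    exact c1 _
  have hmass : ∑ X : V → Γ, ∑ X' : V → Γ, μ X * μ X' * ν = ν := by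
    simp only [← Finset.sum_mul, ← Finset.mul_sum, hμ1]; ring
  rw [hΦ]
  calc _ ≤ ∑ X : V → Γ, ∑ X' : V → Γ, μ X * μ X' *
        ((∑ u, ∑ v, pi u * pi v * (D X X' u v * valv v X)) / (β - ν) + ν) := by
        refine Finset.sum_le_sum fun X _ => Finset.sum_le_sum fun X' _ => ?_
        rw [hsq]
        exact mul_le_mul_of_nonneg_left (hpt X X') (mul_nonneg (hμnn X) (hμnn X'))
    _ = _ := by
        simp only [mul_add, Finset.sum_add_distrib]
        rw [hmass, hPsi]
        simp only [← mul_div_assoc, ← Finset.sum_div]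
end
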